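/- arXiv:1505.02829 — 5 statements merged into one kernel-verified Lean document; each statement's English description precedes it below -/
import Mathlib

section
/- Let G be a cyclically orientable finite simple graph with n vertices, where n ≥ 2. Then G has at most 2·n − 3 edges. -/
/-!
Cyclic orientability is used in a local form: a hole is a vertex set inducing a connected 2-regular
subgraph, and at each vertex of a hole one of its two hole edges enters and the other one leaves
(`HoleOrientable`). At a vertex, two edges lying in a common hole thus have opposite directions;
hence no three edges at a vertex can lie pairwise in common holes, and in particular no vertex is
adjacent to three consecutive vertices of a hole (`no_wheel`).

The property is inherited by induced subgraphs (`HoleOrientable.restrict`) and by the contraction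
of an edge `xy` whose ends have no common neighbour (`HoleOrientable.contract`): every edge of the
contraction comes from a unique edge of the graph, and every hole of the contraction lifts to a
hole of the graph.

The key point is that a triangle is never attached with all three vertices to one connected set
`D` outside it (`triangle_not_attached`). In a minimal counterexample, `D` is an induced path from
`u` to `w`, one triangle vertex is attached to `D` only at `u`, one only at `w`, and the third is
adjacent to `u`. Contracting the first edge of the path would give a smaller counterexample, so
that edge lies in a triangle, which forces the third vertex to be adjacent to the second vertex of
the path too. This contradicts `no_wheel`.

The bound follows by induction on the number of vertices (`edge_bound`). If some edge has no common
neighbour, its contraction has one vertex and exactly one edge less. Otherwise there is a triangle,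
and a component `D` of its complement has no neighbour at one of the three vertices. The opposite
side `ab` of the triangle then splits the graph into the parts induced by `D ∪ {a, b}` and by the
complement of `D`. These share the edge `ab`, and `(2 n₁ - 3) + (2 n₂ - 3) - 1 = 2 n - 3` when
`n₁ + n₂ = n + 2`.
-/

open SimpleGraph

variable {V : Type*}

/-- An orientation of a simple graph `G`: a directed relation choosing, for each
edge of `G`, exactly one of its two possible directions. -/
structure SimpleGraph.Orientation (G : SimpleGraph V) : Type _ where
  dir : V → V → Prop
  dir_adj : ∀ u v, dir u v → G.Adj u v
  adj_iff_dir : ∀ u v, G.Adj u v → (dir u v ↔ ¬ dir v u)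

/-- A closed walk is a chordless cycle if it is a cycle and the only edges of `G`
between vertices of the cycle are the edges of the cycle itself (i.e. it is an
induced cycle). -/
def SimpleGraph.Walk.IsChordlessCycle {G : SimpleGraph V} {v : V} (c : G.Walk v v) : Prop :=
  c.IsCycle ∧ ∀ u w : V, u ∈ c.support → w ∈ c.support → G.Adj u w → s(u, w) ∈ c.edges

/-- A cycle (closed walk) is cyclically oriented by an orientation `o` if all of
its darts point the same way around the cycle. -/
def SimpleGraph.Orientation.IsCyclicOn {G : SimpleGraph V} (o : G.Orientation) {v : V}
    (c : G.Walk v v) : Prop :=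
  (∀ d ∈ c.darts, o.dir d.toProd.1 d.toProd.2) ∨ (∀ d ∈ c.darts, o.dir d.toProd.2 d.toProd.1)

/-- A graph is cyclically orientable if it admits an orientation in which every
chordless cycle is cyclically oriented. -/
def SimpleGraph.CyclicallyOrientable (G : SimpleGraph V) : Prop :=
  ∃ o : G.Orientation, ∀ (v : V) (c : G.Walk v v), c.IsChordlessCycle → o.IsCyclicOn c

/-- A subgraph has no cut vertex if it is connected and remains connected after
the deletion of any single one of its vertices. -/
def SimpleGraph.Subgraph.HasNoCutVertex {G : SimpleGraph V} (H : G.Subgraph) : Prop :=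
  H.coe.Connected ∧ ∀ v ∈ H.verts, (H.deleteVerts {v}).coe.Connected

/-- A block (two-connected component) of `G`: a maximal subgraph of `G` that has
no cut vertex. -/
def SimpleGraph.Subgraph.IsBlock {G : SimpleGraph V} (H : G.Subgraph) : Prop :=
  H.HasNoCutVertex ∧ ∀ H' : G.Subgraph, H ≤ H' → H'.HasNoCutVertex → H' = H

/-- A graph is two-connected if it is connected and the removal of any single
vertex leaves it connected (at least two vertices must be removed to
disconnect it). -/
def SimpleGraph.IsTwoConnected (G : SimpleGraph V) : Prop :=
  G.Connected ∧ ∀ v : V, (G.induce {w : V | w ≠ v}).Connected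

/-- A graph consists of a single cycle: some cycle passes through all its
vertices and uses all its edges. (A cycle has at least 3 vertices.) -/
def SimpleGraph.IsCycleGraph (G : SimpleGraph V) : Prop :=
  ∃ (v : V) (c : G.Walk v v), c.IsCycle ∧ (∀ w : V, w ∈ c.support) ∧
    ∀ e ∈ G.edgeSet, e ∈ c.edges

/-- Two subgraphs meet along the single edge `(x, y)`: their intersection
consists exactly of the vertices `x, y` and the edge between them. -/
def SimpleGraph.Subgraph.MeetAlongSingleEdge {G : SimpleGraph V} (G' C : G.Subgraph)
    (x y : V) : Prop :=
  x ≠ y ∧ (G' ⊓ C).verts = {x, y} ∧ (G' ⊓ C).edgeSet = {s(x, y)}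

namespace COBound

/-! ### Holes as vertex sets -/

/-- `S` is nonempty and induces a connected subgraph of `G`: every subset of `S` (given as `P ∩ S`)
that is nonempty and closed under adjacency within `S` is all of `S`. -/
def IsConn (G : SimpleGraph V) (S : Set V) : Prop :=
  S.Nonempty ∧ ∀ P : Set V, (∃ s ∈ S, s ∈ P) →
    (∀ u ∈ S, u ∈ P → ∀ w ∈ S, G.Adj u w → w ∈ P) → S ⊆ P

/-- `S` is the vertex set of a chordless cycle of `G`, expressed as: the subgraph induced by `S` is
connected and 2-regular. -/
def IsHole (G : SimpleGraph V) (S : Set V) : Prop :=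
  IsConn G S ∧ ∀ x ∈ S, ∃ y ∈ S, ∃ z ∈ S, y ≠ z ∧ G.Adj x y ∧ G.Adj x z ∧
    ∀ w ∈ S, G.Adj x w → w = y ∨ w = z

/-- Cyclic orientability in local form: some orientation has, at each vertex `x` of each hole, one
of the two hole edges at `x` entering and the other leaving. -/
def HoleOrientable (G : SimpleGraph V) : Prop :=
  ∃ o : G.Orientation, ∀ S : Set V, IsHole G S → ∀ x ∈ S, ∀ y ∈ S, ∀ z ∈ S,
    G.Adj x y → G.Adj x z → y ≠ z → (o.dir y x ↔ o.dir x z)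

/-- The subgraph of `G` induced by `A`, kept on the vertex type `V` (vertices outside `A` become
isolated). -/
def restrict (G : SimpleGraph V) (A : Set V) : SimpleGraph V where
  Adj u v := G.Adj u v ∧ u ∈ A ∧ v ∈ A
  symm := ⟨fun _ _ h => ⟨h.1.symm, h.2.2, h.2.1⟩⟩
  loopless := ⟨fun _ h => h.1.ne rfl⟩

theorem restrict_le (G : SimpleGraph V) (A : Set V) : restrict G A ≤ G := fun _ _ h => h.1

theorem IsConn.congr {G H : SimpleGraph V} {S : Set V} (h : IsConn G S)
    (hGH : ∀ u ∈ S, ∀ v ∈ S, G.Adj u v → H.Adj u v) : IsConn H S :=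
  ⟨h.1, fun P hP hc => h.2 P hP fun u hu huP w hw ha => hc u hu huP w hw (hGH u hu w hw ha)⟩

theorem IsHole.congr {G H : SimpleGraph V} {S : Set V} (h : IsHole G S)
    (hGH : ∀ u ∈ S, ∀ v ∈ S, (G.Adj u v ↔ H.Adj u v)) : IsHole H S := by
  refine ⟨h.1.congr fun u hu v hv => (hGH u hu v hv).1, fun x hx => ?_⟩
  obtain ⟨y, hy, z, hz, h1, h2, h3, h4⟩ := h.2 x hx
  exact ⟨y, hy, z, hz, h1, (hGH x hx y hy).1 h2, (hGH x hx z hz).1 h3,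
    fun w hw ha => h4 w hw ((hGH x hx w hw).2 ha)⟩

theorem HoleOrientable.restrict {G : SimpleGraph V} (h : HoleOrientable G) (A : Set V) :
    HoleOrientable (restrict G A) := by
  obtain ⟨o, ho⟩ := h
  refine ⟨⟨fun u v => o.dir u v ∧ u ∈ A ∧ v ∈ A, fun u v h => ⟨o.dir_adj u v h.1, h.2⟩, ?_⟩, ?_⟩
  · rintro u v ⟨h, hu, hv⟩
    have := o.adj_iff_dir u v h
    tauto
  · intro S hS x hx y hy z hz hxy hxz hyz
    have hSA : S ⊆ A := by
      intro s hs
      obtain ⟨y, hy, z, hz, h1, h2, -⟩ := hS.2 s hs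
      exact h2.2.1
    have := ho S (hS.congr fun u hu v hv => ⟨fun h => h.1, fun h => ⟨h, hSA hu, hSA hv⟩⟩)
      x hx y hy z hz hxy.1 hxz.1 hyz
    have := hSA hx
    have := hSA hy
    have := hSA hz
    simp_all

theorem isHole_triangle {G : SimpleGraph V} {a b c : V} (hab : G.Adj a b) (hbc : G.Adj b c)
    (hca : G.Adj c a) : IsHole G {a, b, c} := by
  have h1 := hab.ne
  have h2 := hbc.ne
  have h3 := hca.ne
  have h4 := hab.symm
  have h5 := hbc.symm
  have h6 := hca.symm
  have h7 := G.irrefl (v := a)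
  have h8 := G.irrefl (v := b)
  have h9 := G.irrefl (v := c)
  refine ⟨⟨⟨a, by simp⟩, ?_⟩, ?_⟩
  · intro P hP hc
    have e1 := hc a (by simp)
    have e2 := hc b (by simp)
    have e3 := hc c (by simp)
    obtain ⟨s, hs, hsP⟩ := hP
    intro t ht
    simp only [Set.mem_insert_iff, Set.mem_singleton_iff] at hs ht e1 e2 e3
    grind
  · intro x hx
    simp only [Set.mem_insert_iff, Set.mem_singleton_iff] at hx
    rcases hx with rfl | rfl | rfl
    · exact ⟨b, by simp, c, by simp, h2, hab, h6, by simp_all⟩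
    · exact ⟨a, by simp, c, by simp, h3.symm, h4, hbc, by simp_all⟩
    · exact ⟨a, by simp, b, by simp, h1, hca, h5, by simp_all⟩

/-- A vertex `b` cannot be adjacent to three consecutive vertices `a`, `d`, `e` of a hole: the hole
and the two triangles `b a d`, `b d e` would impose contradictory conditions at `d`. Any two of
the edges `da`, `de`, `db` would have opposite directions at `d`. -/
theorem no_wheel {G : SimpleGraph V} (h : HoleOrientable G) {S : Set V} (hS : IsHole G S)
    {a d e b : V} (ha : a ∈ S) (hd : d ∈ S) (he : e ∈ S) (hae : a ≠ e) (had : G.Adj a d)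
    (hde : G.Adj d e) (hba : G.Adj b a) (hbd : G.Adj b d) (hbe : G.Adj b e) : False := by
  obtain ⟨o, ho⟩ := h
  have r := ho S hS d hd a ha e he had.symm hde hae
  have t1 := ho _ (isHole_triangle hba had hbd.symm) d (by simp) a (by simp) b (by simp)
    had.symm hbd.symm hba.ne'
  have t2 := ho _ (isHole_triangle hbe hde.symm hbd.symm) d (by simp) e (by simp) b (by simp)
    hde hbd.symm hbe.ne'
  have := o.adj_iff_dir _ _ hde
  tauto

/-- A connected 2-regular induced subgraph is traversed by a chordless cycle in the sense of walks,
so a cyclic orientation satisfies the local condition. -/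
theorem holeOrientable_of_cyclicallyOrientable [Finite V] {G : SimpleGraph V}
    (h : G.CyclicallyOrientable) : HoleOrientable G := by
  classical
  obtain ⟨o, ho⟩ := h
  refine ⟨o, fun S hS x hx y hy z hz hxy hxz hyz => ?_⟩
  have hsub : ∀ v ∈ S, ((restrict G S).neighborSet v).ncard = 2 := by
    intro v hv
    obtain ⟨p, hp, q, hq, hpq, h1, h2, h3⟩ := hS.2 v hv
    have : (restrict G S).neighborSet v = {p, q} := by
      ext w
      simp only [SimpleGraph.mem_neighborSet, restrict, Set.mem_insert_iff, Set.mem_singleton_iff]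
      constructor
      · exact fun h => h3 w h.2.2 h.1
      · rintro (rfl | rfl)
        · exact ⟨h1, hv, hp⟩
        · exact ⟨h2, hv, hq⟩
    rw [this, Set.ncard_pair hpq]
  have hcyc : (restrict G S).IsCycles := by
    rintro v ⟨w, hw⟩
    exact hsub v hw.2.1
  obtain ⟨p, hp, hverts⟩ := hcyc.exists_cycle_toSubgraph_verts_eq_connectedComponentSupp
    (c := (restrict G S).connectedComponentMk x) (v := x) rfl ⟨y, hxy, hx, hy⟩
  have hSp : ∀ s ∈ S, s ∈ p.support := by
    intro s hs
    rw [← p.mem_verts_toSubgraph, hverts]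
    refine hS.1.2 (((restrict G S).connectedComponentMk x).supp) ⟨x, hx, rfl⟩ ?_ hs
    intro u hu huP w hw ha
    have : (restrict G S).Adj w u := ⟨ha.symm, hw, hu⟩
    rw [SimpleGraph.ConnectedComponent.mem_supp_iff] at huP ⊢
    rw [← huP]
    exact SimpleGraph.ConnectedComponent.sound this.reachable
  have hpS : ∀ s ∈ p.support, s ∈ S := by
    intro s hs
    have hs2 := hp.ncard_neighborSet_toSubgraph_eq_two hs
    obtain ⟨w, hw⟩ : (p.toSubgraph.neighborSet s).Nonempty := by
      rw [Set.nonempty_iff_ne_empty]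
      intro h
      simp [h] at hs2
    exact (p.toSubgraph.adj_sub hw).2.1
  -- a cycle uses two edges at each of its vertices, which are all the edges inside `S`
  have hedge : ∀ u ∈ S, ∀ w ∈ S, G.Adj u w → p.toSubgraph.Adj u w := by
    intro u hu w hw ha
    have h2 := hp.ncard_neighborSet_toSubgraph_eq_two (hSp u hu)
    have : p.toSubgraph.neighborSet u = (restrict G S).neighborSet u :=
      Set.eq_of_subset_of_ncard_le (p.toSubgraph.neighborSet_subset u)
        (by rw [h2, hsub u hu]) (Set.toFinite _)
    have hw' : w ∈ (restrict G S).neighborSet u := ⟨ha, hu, hw⟩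
    rw [← this] at hw'
    exact hw'
  have hle := restrict_le G S
  have hcl : (p.mapLe hle).IsChordlessCycle := by
    refine ⟨hp.mapLe hle, ?_⟩
    intro u w hu hw ha
    rw [SimpleGraph.Walk.support_mapLe_eq_support] at hu hw
    rw [SimpleGraph.Walk.edges_mapLe_eq_edges]
    exact SimpleGraph.Walk.adj_toSubgraph_iff_mem_edges.1 (hedge u (hpS u hu) w (hpS w hw) ha)
  have hn := hp.neighborSet_toSubgraph_endpoint
  have hy' : y ∈ p.toSubgraph.neighborSet x := hedge x hx y hy hxy
  have hz' : z ∈ p.toSubgraph.neighborSet x := hedge x hx z hz hxz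
  rw [hn] at hy' hz'
  have hfirst : p.firstDart hp.not_nil ∈ p.darts := SimpleGraph.Walk.firstDart_mem_darts _
  have hlast : p.lastDart hp.not_nil ∈ p.darts := SimpleGraph.Walk.lastDart_mem_darts _
  have hdart : ∀ d ∈ p.darts, (SimpleGraph.Hom.ofLE hle).mapDart d ∈ (p.mapLe hle).darts := by
    intro d hd
    rw [SimpleGraph.Walk.darts_map]
    exact List.mem_map_of_mem hd
  have key : (o.dir x p.snd ∧ o.dir p.penultimate x) ∨ (o.dir p.snd x ∧ o.dir x p.penultimate) := by
    rcases ho x _ hcl with h | h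
    · left
      exact ⟨h _ (hdart _ hfirst), h _ (hdart _ hlast)⟩
    · right
      exact ⟨h _ (hdart _ hfirst), h _ (hdart _ hlast)⟩
  have a1 := o.adj_iff_dir _ _ hxy
  have a2 := o.adj_iff_dir _ _ hxz
  simp only [Set.mem_insert_iff, Set.mem_singleton_iff] at hy' hz'
  rcases hy' with rfl | rfl <;> rcases hz' with rfl | rfl <;> tauto

/-! ### Connected sets and induced paths -/

theorem isConn_singleton (G : SimpleGraph V) (v : V) : IsConn G {v} :=
  ⟨⟨v, rfl⟩, by rintro P ⟨s, rfl, hs⟩ - t rfl; exact hs⟩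

theorem IsConn.insert_vertex {G : SimpleGraph V} {S : Set V} (h : IsConn G S) {v s : V} (hs : s ∈ S)
    (ha : G.Adj s v) : IsConn G (insert v S) := by
  refine ⟨⟨v, by simp⟩, fun P hP hc => ?_⟩
  have hSP : ∀ t ∈ S, t ∈ P → S ⊆ P := fun t ht htP => h.2 P ⟨t, ht, htP⟩
    fun u hu huP w hw => hc u (Or.inr hu) huP w (Or.inr hw)
  obtain ⟨t, rfl | ht, htP⟩ := hP
  · have hsP := hc t (Or.inl rfl) htP s (Or.inr hs) ha.symm
    exact Set.insert_subset htP (hSP s hs hsP)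
  · exact Set.insert_subset (hc s (Or.inr hs) (hSP t ht htP hs) v (Or.inl rfl) ha) (hSP t ht htP)

/-- A connected set leaves every proper nonempty part of itself along an edge. -/
theorem IsConn.exists_adj {G : SimpleGraph V} {S P : Set V} (h : IsConn G S) {s t : V}
    (hs : s ∈ S) (hsP : s ∈ P) (ht : t ∈ S) (htP : t ∉ P) :
    ∃ u ∈ S, u ∈ P ∧ ∃ w ∈ S, w ∉ P ∧ G.Adj u w := by
  by_contra! hc
  exact htP (h.2 P ⟨s, hs, hsP⟩ (fun u hu huP w hw ha => by_contra fun hwP =>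
    hc u hu huP w hw hwP ha) ht)

/-- The connected component of `d` within `B`. -/
theorem exists_maximal_isConn [Finite V] (G : SimpleGraph V) {d : V} {B : Set V} (hd : d ∈ B) :
    ∃ D ⊆ B, d ∈ D ∧ IsConn G D ∧ ∀ u ∈ D, ∀ w ∈ B, G.Adj u w → w ∈ D := by
  have hfin : {D : Set V | D ⊆ B ∧ d ∈ D ∧ IsConn G D}.Finite := Set.toFinite _
  obtain ⟨D, hD⟩ := hfin.exists_maximal
    ⟨{d}, Set.singleton_subset_iff.2 hd, rfl, isConn_singleton G d⟩
  refine ⟨D, hD.prop.1, hD.prop.2.1, hD.prop.2.2, fun u hu w hw ha => ?_⟩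
  exact hD.le_of_ge (y := insert w D) ⟨Set.insert_subset hw hD.prop.1, Or.inr hD.prop.2.1,
    hD.prop.2.2.insert_vertex hu ha⟩ (Set.subset_insert w D) (Or.inl rfl)

/-- A connected set with at least two vertices has a non-cut vertex other than `u`: the vertex
completing a maximal proper connected subset containing `u`. -/
theorem IsConn.exists_diff_isConn [Finite V] {G : SimpleGraph V} {D : Set V} (h : IsConn G D)
    {u v : V} (hu : u ∈ D) (hv : v ∈ D) (huv : v ≠ u) :
    ∃ w ∈ D, w ≠ u ∧ IsConn G (D \ {w}) := by
  have hfin : {E : Set V | E ⊆ D ∧ E ≠ D ∧ u ∈ E ∧ IsConn G E}.Finite := Set.toFinite _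
  obtain ⟨E, hE⟩ := hfin.exists_maximal ⟨{u}, Set.singleton_subset_iff.2 hu,
    fun he => huv (by rw [← he] at hv; exact hv), rfl, isConn_singleton G u⟩
  obtain ⟨hED, hne, huE, hEc⟩ := hE.prop
  obtain ⟨t, ht, htE⟩ := Set.exists_of_ssubset (hED.ssubset_of_ne hne)
  obtain ⟨s, hs, hsE, w, hw, hwE, ha⟩ := h.exists_adj hu huE ht htE
  have hins : insert w E = D := by
    by_contra hne'
    exact hwE (hE.le_of_ge (y := insert w E) ⟨Set.insert_subset hw hED, hne', Or.inr huE,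
      hEc.insert_vertex hsE ha⟩ (Set.subset_insert w E) (Or.inl rfl))
  refine ⟨w, hw, fun hwu => hwE (hwu ▸ huE), ?_⟩
  have : D \ {w} = E := by
    rw [← hins]
    exact Set.insert_sdiff_self_of_notMem hwE
  rwa [this]

/-- `IndPath G a w P`: the set `P` is the vertex set of an induced path of `G` from `a` to `w`.
A new first vertex `a` must be adjacent to exactly one vertex of the remaining path, its first. -/
inductive IndPath (G : SimpleGraph V) : V → V → Set V → Prop
  | single (v : V) : IndPath G v v {v}
  | cons {a u w : V} {P : Set V} (hP : IndPath G u w P) (ha : a ∉ P) (hau : G.Adj a u)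
      (huniq : ∀ p ∈ P, G.Adj a p → p = u) : IndPath G a w (insert a P)

theorem IndPath.left_mem {G : SimpleGraph V} {a w : V} {P : Set V} (h : IndPath G a w P) :
    a ∈ P := by
  cases h <;> simp

theorem IndPath.right_mem {G : SimpleGraph V} {a w : V} {P : Set V} (h : IndPath G a w P) :
    w ∈ P := by
  induction h with
  | single v => rfl
  | cons _ _ _ _ ih => exact Or.inr ih

theorem IndPath.isConn {G : SimpleGraph V} {a w : V} {P : Set V} (h : IndPath G a w P) :
    IsConn G P := by
  induction h with
  | single v => exact isConn_singleton G v
  | cons hP _ hau _ ih => exact ih.insert_vertex hP.left_mem hau.symm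

theorem IndPath.suffix {G : SimpleGraph V} {a w : V} {P : Set V} (h : IndPath G a w P) {x : V}
    (hx : x ∈ P) : ∃ Q ⊆ P, IndPath G x w Q := by
  induction h with
  | single v => exact ⟨_, subset_rfl, by rw [Set.mem_singleton_iff.1 hx]; exact .single v⟩
  | @cons a u w P hP ha hau hun ih =>
    rcases hx with rfl | hx
    · exact ⟨_, subset_rfl, .cons hP ha hau hun⟩
    · obtain ⟨Q, hQ, hQp⟩ := ih hx
      exact ⟨Q, hQ.trans (Set.subset_insert _ _), hQp⟩

/-- Following the path from the last neighbour `u` of `x` on it: `x` is adjacent to no later vertex,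
so the suffix can be prolonged by `x`. -/
theorem IndPath.suffix_adj {G : SimpleGraph V} {a w : V} {P : Set V} (h : IndPath G a w P) {x : V}
    (hx : ∃ p ∈ P, G.Adj x p) :
    ∃ Q ⊆ P, ∃ u, IndPath G u w Q ∧ G.Adj x u ∧ ∀ p ∈ Q, G.Adj x p → p = u := by
  induction h with
  | single v =>
    obtain ⟨p, rfl, hp⟩ := hx
    exact ⟨_, subset_rfl, p, .single p, hp, fun q hq _ => hq⟩
  | @cons a u w P hP ha hau hun ih =>
    by_cases hxP : ∃ p ∈ P, G.Adj x p
    · obtain ⟨Q, hQ, hQp⟩ := ih hxP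
      exact ⟨Q, hQ.trans (Set.subset_insert _ _), hQp⟩
    · obtain ⟨p, rfl | hp, hpx⟩ := hx
      · refine ⟨_, subset_rfl, p, .cons hP ha hau hun, hpx, ?_⟩
        rintro q (rfl | hq) hqx
        · rfl
        · exact absurd ⟨q, hq, hqx⟩ hxP
      · exact absurd ⟨p, hp, hpx⟩ hxP

theorem IsConn.exists_indPath {G : SimpleGraph V} {D : Set V} (h : IsConn G D) {u w : V}
    (hu : u ∈ D) (hw : w ∈ D) : ∃ P ⊆ D, IndPath G u w P := by
  refine h.2 {x | ∃ P ⊆ D, IndPath G x w P} ⟨w, hw, {w}, Set.singleton_subset_iff.2 hw, .single w⟩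
    ?_ hu
  rintro p hp ⟨P, hPD, hP⟩ x hx ha
  by_cases hxP : x ∈ P
  · obtain ⟨Q, hQ, hQp⟩ := hP.suffix hxP
    exact ⟨Q, hQ.trans hPD, hQp⟩
  · obtain ⟨Q, hQ, u, hQp, hxu, hun⟩ := hP.suffix_adj ⟨p, hP.left_mem, ha.symm⟩
    exact ⟨_, Set.insert_subset hx (hQ.trans hPD), .cons hQp (fun h => hxP (hQ h)) hxu hun⟩

/-- The degrees inside an induced path: one at the ends (if these differ), two elsewhere. -/
theorem IndPath.degrees {G : SimpleGraph V} {a w : V} {P : Set V} (h : IndPath G a w P) :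
    (a = w → P = {a}) ∧
    (a ≠ w → ∃ y ∈ P, G.Adj a y ∧ ∀ p ∈ P, G.Adj a p → p = y) ∧
    (a ≠ w → ∃ y ∈ P, G.Adj w y ∧ ∀ p ∈ P, G.Adj w p → p = y) ∧
    ∀ x ∈ P, x ≠ a → x ≠ w → ∃ y ∈ P, ∃ z ∈ P, y ≠ z ∧ G.Adj x y ∧ G.Adj x z ∧
      ∀ p ∈ P, G.Adj x p → p = y ∨ p = z := by
  induction h with
  | single v => simp
  | @cons a u w P hP ha hau hun ih =>
    obtain ⟨i1, i2, i3, i4⟩ := ih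
    have haw : a ≠ w := fun h => ha (h ▸ hP.right_mem)
    have hu := hP.left_mem
    have hw := hP.right_mem
    refine ⟨fun h => absurd h haw, fun _ => ?_, fun _ => ?_, ?_⟩
    · refine ⟨u, Or.inr hP.left_mem, hau, ?_⟩
      rintro p (rfl | hp) hap
      · exact absurd hap G.irrefl
      · exact hun p hp hap
    · by_cases huw : u = w
      · have := i1 huw
        subst huw
        refine ⟨a, Or.inl rfl, hau.symm, ?_⟩
        rintro p (rfl | hp) hap
        · rfl
        · rw [this] at hp
          rw [Set.mem_singleton_iff.1 hp] at hap
          exact absurd hap G.irrefl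
      · obtain ⟨y, hy, hwy, hyu⟩ := i3 huw
        refine ⟨y, Or.inr hy, hwy, ?_⟩
        rintro p (rfl | hp) hap
        · exact absurd (hun w hw hap.symm).symm huw
        · exact hyu p hp hap
    · rintro x (rfl | hx) hxa hxw
      · exact absurd rfl hxa
      · by_cases hxu : x = u
        · subst hxu
          obtain ⟨y, hy, hay, hyu⟩ := i2 hxw
          refine ⟨y, Or.inr hy, a, Or.inl rfl, fun h => ha (h ▸ hy), hay, hau.symm, ?_⟩
          rintro p (rfl | hp) hap
          · exact Or.inr rfl
          · exact Or.inl (hyu p hp hap)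
        · obtain ⟨y, hy, z, hz, hyz, h1, h2, h3⟩ := i4 x hx hxu hxw
          refine ⟨y, Or.inr hy, z, Or.inr hz, hyz, h1, h2, ?_⟩
          rintro p (rfl | hp) hap
          · exact absurd (hun x hx hap.symm) hxu
          · exact h3 p hp hap

/-- A vertex adjacent to the two ends of an induced path and to nothing else on it closes the path
to a hole. -/
theorem IndPath.isHole_insert {G : SimpleGraph V} {a w c : V} {P : Set V} (h : IndPath G a w P)
    (haw : a ≠ w) (hc : c ∉ P) (hca : G.Adj c a) (hcw : G.Adj c w)
    (hcP : ∀ p ∈ P, G.Adj c p → p = a ∨ p = w) : IsHole G (insert c P) := by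
  obtain ⟨-, i2, i3, i4⟩ := h.degrees
  have ha := h.left_mem
  have hw := h.right_mem
  refine ⟨h.isConn.insert_vertex ha hca.symm, ?_⟩
  rintro x (rfl | hx)
  · refine ⟨a, Or.inr ha, w, Or.inr hw, haw, hca, hcw, ?_⟩
    rintro p (rfl | hp) hap
    · exact absurd hap G.irrefl
    · exact hcP p hp hap
  by_cases hxa : x = a
  · subst hxa
    obtain ⟨y, hy, hay, hyu⟩ := i2 haw
    refine ⟨y, Or.inr hy, c, Or.inl rfl, fun h => hc (h ▸ hy), hay, hca.symm, ?_⟩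
    rintro p (rfl | hp) hap
    · exact Or.inr rfl
    · exact Or.inl (hyu p hp hap)
  by_cases hxw : x = w
  · subst hxw
    obtain ⟨y, hy, hay, hyu⟩ := i3 haw
    refine ⟨y, Or.inr hy, c, Or.inl rfl, fun h => hc (h ▸ hy), hay, hcw.symm, ?_⟩
    rintro p (rfl | hp) hap
    · exact Or.inr rfl
    · exact Or.inl (hyu p hp hap)
  obtain ⟨y, hy, z, hz, hyz, h1, h2, h3⟩ := i4 x hx hxa hxw
  refine ⟨y, Or.inr hy, z, Or.inr hz, hyz, h1, h2, ?_⟩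
  rintro p (rfl | hp) hap
  · rcases hcP x hx hap.symm with h | h
    · exact absurd h hxa
    · exact absurd h hxw
  · exact h3 p hp hap

/-! ### Contraction of an edge without common neighbours -/

/-- The contraction of `x` and `y` into `x`, kept on the vertex type `V`: the vertex `y` becomes
isolated, and `x` inherits its neighbours. -/
def contract (G : SimpleGraph V) (x y : V) : SimpleGraph V where
  Adj u v := u ≠ y ∧ v ≠ y ∧ u ≠ v ∧ (G.Adj u v ∨ (u = x ∧ G.Adj y v) ∨ (v = x ∧ G.Adj u y))
  symm := ⟨fun u v h => by
    have := G.adj_comm u v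
    have := G.adj_comm u y
    have := G.adj_comm y v
    tauto⟩
  loopless := ⟨fun _ h => h.2.2.1 rfl⟩

theorem contract_adj_of_adj {G : SimpleGraph V} {x y u v : V} (h : G.Adj u v) (hu : u ≠ y)
    (hv : v ≠ y) : (contract G x y).Adj u v := ⟨hu, hv, h.ne, Or.inl h⟩

theorem contract_adj_of_adj_right {G : SimpleGraph V} {x y v : V} (h : G.Adj y v) (hv : v ≠ x) :
    (contract G x y).Adj x v ∨ x = y := by
  by_cases hxy : x = y
  · exact Or.inr hxy
  · exact Or.inl ⟨hxy, h.ne', hv.symm, Or.inr (Or.inl ⟨rfl, h⟩)⟩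

/-- Connectedness lifts along a surjection `π : T → S` whose fibres are cliques, if every edge
within `S` is the image of an edge within `T`. -/
theorem IsConn.lift {G H : SimpleGraph V} {S T : Set V} (π : V → V) (hS : IsConn H S)
    (hsurj : ∀ s ∈ S, ∃ t ∈ T, π t = s) (hmaps : ∀ t ∈ T, π t ∈ S)
    (hfib : ∀ t ∈ T, ∀ t' ∈ T, π t = π t' → t = t' ∨ G.Adj t t')
    (hadj : ∀ u ∈ S, ∀ w ∈ S, H.Adj u w → ∃ u' ∈ T, ∃ w' ∈ T, π u' = u ∧ π w' = w ∧ G.Adj u' w') :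
    IsConn G T := by
  obtain ⟨s, hs⟩ := hS.1
  obtain ⟨t, ht, -⟩ := hsurj s hs
  refine ⟨⟨t, ht⟩, fun P hP hc => ?_⟩
  have hsat : ∀ t ∈ T, ∀ t' ∈ T, π t = π t' → t' ∈ P → t ∈ P := by
    intro t ht t' ht' he hP
    rcases hfib t' ht' t ht he.symm with rfl | ha
    · exact hP
    · exact hc t' ht' hP t ht ha
  have key : S ⊆ {s | ∃ t ∈ T, π t = s ∧ t ∈ P} := by
    obtain ⟨t, ht, htP⟩ := hP
    refine hS.2 _ ⟨π t, hmaps t ht, t, ht, rfl, htP⟩ ?_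
    rintro u hu ⟨r, hr, hru, hrP⟩ w hw ha
    obtain ⟨u', hu', w', hw', rfl, rfl, ha'⟩ := hadj u hu w hw ha
    exact ⟨w', hw', rfl, hc u' hu' (hsat u' hu' r hr hru.symm hrP) w' hw' ha'⟩
  intro t ht
  obtain ⟨t', ht', he, hP'⟩ := key (hmaps t ht)
  exact hsat t ht t' ht' he.symm hP'

theorem IsConn.contract {G : SimpleGraph V} {D : Set V} (h : IsConn G D) {x y : V} (hx : x ∈ D)
    (hxy : x ≠ y) : IsConn (contract G x y) (D \ {y}) := by
  refine ⟨⟨x, hx, hxy⟩, fun P hP hc => ?_⟩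
  have key : D ⊆ {t | (t ≠ y ∧ t ∈ P) ∨ (t = y ∧ x ∈ P)} := by
    obtain ⟨s, hs, hsP⟩ := hP
    refine h.2 _ ⟨s, hs.1, Or.inl ⟨hs.2, hsP⟩⟩ ?_
    rintro u hu hu' w hw ha
    have hc1 := fun h => hc u ⟨hu, h⟩
    have hc2 := hc x ⟨hx, hxy⟩
    by_cases hwy : w = y
    · subst hwy
      refine Or.inr ⟨rfl, ?_⟩
      have huw := ha.ne
      by_cases hux : u = x
      · grind
      · have : (COBound.contract G x w).Adj u x :=
          ((contract_adj_of_adj_right ha.symm hux).resolve_right hxy).symm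
        grind
    · refine Or.inl ⟨hwy, ?_⟩
      by_cases huy : u = y
      · subst huy
        by_cases hwx : w = x
        · grind
        · have := (contract_adj_of_adj_right ha hwx).resolve_right hxy
          grind
      · have := contract_adj_of_adj (x := x) ha huy hwy
        grind
  rintro t ⟨ht, hty⟩
  have := key ht
  grind

/-- A hole `S` through the contracted vertex lifts to a hole `T` of `G`, where `T` replaces `x` by
those of `x`, `y` having a neighbour on `S`. The degrees at `x` and `y` are left as the
hypothesis `hdeg`; at the other vertices they follow because no vertex is adjacent to both `x` and
`y`. -/
theorem contract_isHole_lift {G : SimpleGraph V} {x y : V} (hxy : G.Adj x y)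
    (hno : ∀ z, G.Adj x z → ¬ G.Adj y z) {S T : Set V} (hS : IsHole (contract G x y) S)
    (hxS : x ∈ S)
    (hT : ∀ s, s ≠ x → s ≠ y → (s ∈ T ↔ s ∈ S))
    (hTx : ∀ p ∈ S, G.Adj x p → x ∈ T) (hTy : ∀ p ∈ S, p ≠ x → G.Adj y p → y ∈ T)
    (hdeg : ∀ v ∈ T, v = x ∨ v = y → ∃ p ∈ T, ∃ q ∈ T, p ≠ q ∧ G.Adj v p ∧ G.Adj v q ∧
      ∀ w ∈ T, G.Adj v w → w = p ∨ w = q) : IsHole G T := by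
  classical
  have hyS : y ∉ S := by
    intro hy
    obtain ⟨p, -, q, -, -, h, -⟩ := hS.2 y hy
    exact h.1 rfl
  have hxT : x ∈ T ∨ y ∈ T := by
    obtain ⟨p, hp, q, -, -, h, -⟩ := hS.2 x hxS
    have := hTx p hp
    have := hTy p hp h.2.2.1.symm
    rcases h.2.2.2 with h' | h' | h'
    · tauto
    · tauto
    · exact absurd h'.1.symm h.2.2.1
  have hne := hxy.ne
  refine ⟨hS.1.lift (fun t => if t = y then x else t) ?_ ?_ ?_ ?_, ?_⟩
  · intro s hs
    by_cases h : s = x <;> grind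
  · intro t ht
    grind
  · intro t ht t' ht' h
    have := hxy.symm
    grind
  · intro u hu w hw ha
    obtain ⟨h1, h2, h3, h4⟩ := ha
    rcases h4 with h4 | ⟨rfl, h4⟩ | ⟨rfl, h4⟩
    · exact ⟨u, by grind [G.adj_comm], w, by grind [G.adj_comm], by grind, by grind, h4⟩
    · exact ⟨y, by grind [G.adj_comm], w, by grind [G.adj_comm], by grind, by grind, h4⟩
    · exact ⟨u, by grind [G.adj_comm], y, by grind [G.adj_comm], by grind, by grind, h4⟩
  · intro v hv
    by_cases hvxy : v = x ∨ v = y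
    · exact hdeg v hv hvxy
    push Not at hvxy
    obtain ⟨hvx, hvy⟩ := hvxy
    have hvS := (hT v hvx hvy).1 hv
    obtain ⟨α, hα, β, hβ, hαβ, h1, h2, h3⟩ := hS.2 v hvS
    have hlift : ∀ α ∈ S, (COBound.contract G x y).Adj v α → ∃ a ∈ T, G.Adj v a ∧
        (∀ w, G.Adj v w → (w = α ∨ (α = x ∧ w = y)) → w = a) ∧ (a = α ∨ (α = x ∧ a = y)) := by
      rintro α hα ⟨-, h2, h3, h4⟩
      have := hno v
      by_cases hαx : α = x
      · subst hαx
        by_cases hva : G.Adj v α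
        · exact ⟨α, hTx v hvS hva.symm, hva, by grind [G.adj_comm], by grind⟩
        · exact ⟨y, hTy v hvS hvx (by grind [G.adj_comm]), by grind, by grind [G.adj_comm], by grind⟩
      · exact ⟨α, by grind, by grind, by grind, by grind⟩
    obtain ⟨a, ha, hva, ha1, ha2⟩ := hlift α hα h1
    obtain ⟨b, hb, hvb, hb1, hb2⟩ := hlift β hβ h2
    refine ⟨a, ha, b, hb, by grind, hva, hvb, fun w hw hvw => ?_⟩
    by_cases hwy : w = y
    · have h4 : (COBound.contract G x y).Adj v x := by
        subst hwy
        exact ((contract_adj_of_adj_right hvw.symm hvx).resolve_right hne).symm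
      have := h3 x hxS h4
      grind
    · have h4 : (COBound.contract G x y).Adj v w := contract_adj_of_adj hvw hvy hwy
      have := h3 w (by grind) h4
      grind

/-- Splitting the contracted vertex into `x` and `y`: if `p`, `q` are the two rim vertices next to
it and `x` has one of them as a neighbour, then `x` has degree two in the lifted set `T`. The
neighbours of `x` are `p` and `q`, or one of them and `y`. -/
theorem exists_two_nbrs_of_split {G : SimpleGraph V} {x y p q : V} {T : Set V} (hxy : G.Adj x y)
    (hno : ∀ z, G.Adj x z → ¬ G.Adj y z) (hpT : p ∈ T) (hqT : q ∈ T) (hpq : p ≠ q) (hpy : p ≠ y)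
    (hqy : q ≠ y) (hp : G.Adj x p ∨ G.Adj y p) (hq : G.Adj x q ∨ G.Adj y q)
    (hun : ∀ w ∈ T, w ≠ x → w ≠ y → (G.Adj x w ∨ G.Adj y w) → w = p ∨ w = q)
    (hx : ∃ r ∈ T, r ≠ y ∧ G.Adj x r) (hTy : G.Adj y p ∨ G.Adj y q → y ∈ T)
    (hyT : y ∈ T → ∃ r ∈ T, r ≠ x ∧ G.Adj y r) :
    ∃ p' ∈ T, ∃ q' ∈ T, p' ≠ q' ∧ G.Adj x p' ∧ G.Adj x q' ∧
      ∀ w ∈ T, G.Adj x w → w = p' ∨ w = q' := by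
  have hun' : ∀ w ∈ T, w ≠ y → G.Adj x w → w = p ∨ w = q :=
    fun w hw hwy h => hun w hw h.ne' hwy (Or.inl h)
  by_cases h1 : G.Adj x p <;> by_cases h2 : G.Adj x q
  · refine ⟨p, hpT, q, hqT, hpq, h1, h2, fun w hw hxw => hun' w hw ?_ hxw⟩
    rintro rfl
    obtain ⟨r, hr, hrx, hwr⟩ := hyT hw
    rcases hun r hr hrx hwr.ne' (Or.inr hwr) with rfl | rfl
    · exact hno _ h1 hwr
    · exact hno _ h2 hwr
  · refine ⟨p, hpT, y, hTy (Or.inr (hq.resolve_left h2)), hpy, h1, hxy, fun w hw hxw => ?_⟩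
    by_cases hwy : w = y
    · exact Or.inr hwy
    · rcases hun' w hw hwy hxw with rfl | rfl
      · exact Or.inl rfl
      · exact absurd hxw h2
  · refine ⟨q, hqT, y, hTy (Or.inl (hp.resolve_left h1)), hqy, h2, hxy, fun w hw hxw => ?_⟩
    by_cases hwy : w = y
    · exact Or.inr hwy
    · rcases hun' w hw hwy hxw with rfl | rfl
      · exact absurd hxw h1
      · exact Or.inl rfl
  · obtain ⟨r, hr, hry, hxr⟩ := hx
    rcases hun' r hr hry hxr with rfl | rfl
    · exact absurd hxr h1
    · exact absurd hxr h2

/-- Each edge of the contraction comes from exactly one edge of `G`, whose direction it inherits.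
A hole of the contraction through `x` lifts to a hole of `G`, in which `x` is kept, replaced by
`y`, or replaced by the edge `xy`; in the last case the local condition at `x` in the contraction
is the composite of the conditions at `x` and at `y`. -/
theorem HoleOrientable.contract {G : SimpleGraph V} (h : HoleOrientable G) {x y : V}
    (hxy : G.Adj x y) (hno : ∀ z, G.Adj x z → ¬ G.Adj y z) : HoleOrientable (contract G x y) := by
  obtain ⟨o, ho⟩ := h
  have hne := hxy.ne
  have hda := o.dir_adj
  have hanti := o.adj_iff_dir
  let o' : (COBound.contract G x y).Orientation :=
    { dir := fun u v => u ≠ y ∧ v ≠ y ∧ (o.dir u v ∨ (u = x ∧ v ≠ x ∧ o.dir y v) ∨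
        (v = x ∧ u ≠ x ∧ o.dir u y))
      dir_adj := by
        rintro u v ⟨h1, h2, h3⟩
        refine ⟨h1, h2, ?_, ?_⟩
        · rintro rfl
          have := hda u u
          have := G.irrefl (v := u)
          grind
        · grind
      adj_iff_dir := by
        rintro u v ⟨h1, h2, h3, h4⟩
        have := hno u
        have := hno v
        have := hanti u v
        have := hanti y v
        have := hanti u y
        have := hda u v
        have := hda v u
        have := hda y v
        have := hda v y
        have := hda y u
        have := hda u y
        grind [G.adj_comm] }
  -- the new orientation is read off from `o` on the edge of `G` that an edge comes from
  have d1 : ∀ u v, u ≠ x → v ≠ x → u ≠ y → v ≠ y → (o'.dir u v ↔ o.dir u v) := by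
    intro u v _ _ _ _
    simp only [o']
    grind
  have d2 : ∀ v, G.Adj x v → v ≠ y → (o'.dir x v ↔ o.dir x v) ∧ (o'.dir v x ↔ o.dir v x) := by
    intro v hv _
    have := hno v hv
    have := hda y v
    have := hda v y
    have := G.adj_comm v y
    have := hv.ne
    simp only [o']
    grind
  have d3 : ∀ v, G.Adj y v → v ≠ x → (o'.dir x v ↔ o.dir y v) ∧ (o'.dir v x ↔ o.dir v y) := by
    intro v hv _
    have := hno v
    have := hda x v
    have := hda v x
    have := G.adj_comm v x
    have := hv.ne
    simp only [o']
    grind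
  clear_value o'
  refine ⟨o', fun S hS v hv α hα β hβ hvα hvβ hαβ => ?_⟩
  have hyS : y ∉ S := by
    intro hy
    obtain ⟨p, -, q, -, -, h, -⟩ := hS.2 y hy
    exact h.1 rfl
  have hSy : ∀ s ∈ S, s ≠ y := fun s hs h => hyS (h ▸ hs)
  by_cases hxS : x ∈ S
  swap
  · have hSx : ∀ s ∈ S, s ≠ x := fun s hs h => hxS (h ▸ hs)
    have hadj : ∀ u ∈ S, ∀ w ∈ S, ((COBound.contract G x y).Adj u w ↔ G.Adj u w) := by
      intro u hu w hw
      refine ⟨?_, fun h => contract_adj_of_adj h (hSy u hu) (hSy w hw)⟩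
      rintro ⟨-, -, -, h | h | h⟩
      · exact h
      · exact absurd h.1 (hSx u hu)
      · exact absurd h.1 (hSx w hw)
    rw [d1 _ _ (hSx α hα) (hSx v hv) (hSy α hα) (hSy v hv),
      d1 _ _ (hSx v hv) (hSx β hβ) (hSy v hv) (hSy β hβ)]
    exact ho S (hS.congr hadj) v hv α hα β hβ ((hadj v hv α hα).1 hvα) ((hadj v hv β hβ).1 hvβ) hαβ
  -- the lifted hole: `x` is replaced by those of `x`, `y` that have a neighbour on it
  let T : Set V := {s | (s ∈ S ∧ s ≠ x) ∨ (s = x ∧ ∃ p ∈ S, G.Adj x p) ∨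
    (s = y ∧ ∃ p ∈ S, p ≠ x ∧ G.Adj y p)}
  have hxnbr : ∀ p ∈ S, (COBound.contract G x y).Adj x p → p ≠ x ∧ p ≠ y ∧
      (G.Adj x p ∨ G.Adj y p) := by
    rintro p hp ⟨h1, h2, h3, h4⟩
    grind
  have hnbrx : ∀ p ∈ S, p ≠ x → (G.Adj x p ∨ G.Adj y p) → (COBound.contract G x y).Adj x p := by
    rintro p hp hpx (h | h)
    · exact contract_adj_of_adj h hne (hSy p hp)
    · exact (contract_adj_of_adj_right h hpx).resolve_right hne
  have hTx : ∀ p ∈ S, G.Adj x p → x ∈ T := fun p hp h => Or.inr (Or.inl ⟨rfl, p, hp, h⟩)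
  have hTy : ∀ p ∈ S, p ≠ x → G.Adj y p → y ∈ T :=
    fun p hp hpx h => Or.inr (Or.inr ⟨rfl, p, hp, hpx, h⟩)
  have hTS : ∀ s, s ≠ x → s ≠ y → (s ∈ T ↔ s ∈ S) := by
    intro s h1 h2
    simp only [T, Set.mem_ofPred_eq]
    tauto
  have hxT : x ∈ T → ∃ p ∈ S, G.Adj x p := by
    simp only [T, Set.mem_ofPred_eq]
    grind
  have hyT : y ∈ T → ∃ p ∈ S, p ≠ x ∧ G.Adj y p := by
    simp only [T, Set.mem_ofPred_eq]
    grind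
  clear_value T
  have hT : IsHole G T := by
    refine contract_isHole_lift hxy hno hS hxS hTS hTx hTy ?_
    obtain ⟨p, hp, q, hq, hpq, hxp, hxq, hun⟩ := hS.2 x hxS
    obtain ⟨hpx, hpy, hp'⟩ := hxnbr p hp hxp
    obtain ⟨hqx, hqy, hq'⟩ := hxnbr q hq hxq
    have hpT := (hTS p hpx hpy).2 hp
    have hqT := (hTS q hqx hqy).2 hq
    have hun' : ∀ w ∈ T, w ≠ x → w ≠ y → (G.Adj x w ∨ G.Adj y w) → w = p ∨ w = q := by
      intro w hw hwx hwy h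
      have hwS := (hTS w hwx hwy).1 hw
      exact hun w hwS (hnbrx w hwS hwx h)
    have hxT' : x ∈ T → ∃ r ∈ T, r ≠ y ∧ G.Adj x r := by
      intro h
      obtain ⟨r, hr, ha⟩ := hxT h
      exact ⟨r, (hTS r ha.ne' (hSy r hr)).2 hr, hSy r hr, ha⟩
    have hyT' : y ∈ T → ∃ r ∈ T, r ≠ x ∧ G.Adj y r := by
      intro h
      obtain ⟨r, hr, hrx, ha⟩ := hyT h
      exact ⟨r, (hTS r hrx (hSy r hr)).2 hr, hrx, ha⟩
    rintro v hv (rfl | rfl)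
    · exact exists_two_nbrs_of_split hxy hno hpT hqT hpq hpy hqy hp' hq' hun' (hxT' hv)
        (fun h => h.elim (hTy p hp hpx) (hTy q hq hqx)) hyT'
    · exact exists_two_nbrs_of_split hxy.symm (fun z h1 h2 => hno z h2 h1) hpT hqT hpq hpx hqx
        hp'.symm hq'.symm (fun w hw h1 h2 h => hun' w hw h2 h1 h.symm) (hyT' hv)
        (fun h => h.elim (hTx p hp) (hTx q hq)) hxT'
  have hT' := ho T hT
  have hαy := hSy α hα
  have hβy := hSy β hβ
  have hvy := hSy v hv
  by_cases hvx : v = x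
  · subst hvx
    obtain ⟨hαx, -, hα'⟩ := hxnbr α hα hvα
    obtain ⟨hβx, -, hβ'⟩ := hxnbr β hβ hvβ
    have hαT := (hTS α hαx hαy).2 hα
    have hβT := (hTS β hβx hβy).2 hβ
    rcases hα' with h1 | h1 <;> rcases hβ' with h2 | h2
    · rw [(d2 α h1 hαy).2, (d2 β h2 hβy).1]
      exact hT' v (hTx α hα h1) α hαT β hβT h1 h2 hαβ
    · rw [(d2 α h1 hαy).2, (d3 β h2 hβx).1]
      exact (hT' v (hTx α hα h1) α hαT y (hTy β hβ hβx h2) h1 hxy hαy).trans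
        (hT' y (hTy β hβ hβx h2) v (hTx α hα h1) β hβT hxy.symm h2 hβx.symm)
    · rw [(d3 α h1 hαx).2, (d2 β h2 hβy).1]
      exact (hT' y (hTy α hα hαx h1) α hαT v (hTx β hβ h2) h1 hxy.symm hαx).trans
        (hT' v (hTx β hβ h2) y (hTy α hα hαx h1) β hβT hxy h2 hβy.symm)
    · rw [(d3 α h1 hαx).2, (d3 β h2 hβx).1]
      exact hT' y (hTy α hα hαx h1) α hαT β hβT h1 h2 hαβ
  · have hvT := (hTS v hvx hvy).2 hv
    have hlift : ∀ γ ∈ S, (COBound.contract G x y).Adj v γ → ∃ g ∈ T, G.Adj v g ∧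
        (o'.dir γ v ↔ o.dir g v) ∧ (o'.dir v γ ↔ o.dir v g) ∧ (g = γ ∨ (γ = x ∧ g = y)) := by
      intro γ hγ hvγ
      have hγy := hSy γ hγ
      by_cases hγx : γ = x
      · subst hγx
        obtain ⟨-, -, h | h⟩ := hxnbr v hv hvγ.symm
        · exact ⟨γ, hTx v hv h, h.symm, (d2 v h hvy).1, (d2 v h hvy).2, Or.inl rfl⟩
        · exact ⟨y, hTy v hv hvx h, h.symm, (d3 v h hvx).1, (d3 v h hvx).2, Or.inr ⟨rfl, rfl⟩⟩
      · refine ⟨γ, (hTS γ hγx hγy).2 hγ, ?_, d1 _ _ hγx hvx hγy hvy, d1 _ _ hvx hγx hvy hγy,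
          Or.inl rfl⟩
        obtain ⟨-, -, -, h | h | h⟩ := hvγ
        · exact h
        · exact absurd h.1 hvx
        · exact absurd h.1 hγx
    obtain ⟨a, haT, hva, ha1, -, ha3⟩ := hlift α hα hvα
    obtain ⟨b, hbT, hvb, -, hb2, hb3⟩ := hlift β hβ hvβ
    rw [ha1, hb2]
    exact hT' v hvT a haT b hbT hva hvb (by grind)

/-! ### Triangles separate -/

/-- In a hole-orientable graph no connected set `D` disjoint from a triangle `t` can have neighbours
of all three vertices of `t`. Induction on the size of `D`: in a minimal counterexample every
non-cut vertex of `D` is the only neighbour in `D` of some `t i`, and (by contracting) also a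
neighbour of another `t j`. Two non-cut vertices `u` and `w` exist, and minimality makes `D` an
induced path from `u` to `w`. Together with two vertices of the triangle this path is a hole, and
the third vertex of the triangle is adjacent to three consecutive vertices of it. -/
theorem triangle_not_attached [Finite V] (n : ℕ) : ∀ (G : SimpleGraph V), HoleOrientable G →
    ∀ (t : Fin 3 → V) (D : Set V), D.ncard = n → (∀ i j, i ≠ j → G.Adj (t i) (t j)) →
    IsConn G D → (∀ i, t i ∉ D) → (∀ i, ∃ d ∈ D, G.Adj (t i) d) → False := by
  induction n using Nat.strong_induction_on with
  | _ n ih =>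
  intro G₀ hG₀ t D hDn ht₀ hD₀ htD hatt₀
  -- vertices outside the triangle and `D` are discarded
  obtain ⟨G, hG, ht, hD, hatt, hsupp⟩ : ∃ G : SimpleGraph V, HoleOrientable G ∧
      (∀ i j, i ≠ j → G.Adj (t i) (t j)) ∧ IsConn G D ∧ (∀ i, ∃ d ∈ D, G.Adj (t i) d) ∧
      ∀ u v, G.Adj u v → u ∈ D ∨ ∃ i, u = t i := by
    refine ⟨restrict G₀ (D ∪ Set.range t), hG₀.restrict _,
      fun i j hij => ⟨ht₀ i j hij, Or.inr ⟨i, rfl⟩, Or.inr ⟨j, rfl⟩⟩,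
      hD₀.congr fun u hu v hv h => ⟨h, Or.inl hu, Or.inl hv⟩, ?_, ?_⟩
    · intro i
      obtain ⟨d, hd, ha⟩ := hatt₀ i
      exact ⟨d, hd, ha, Or.inr ⟨i, rfl⟩, Or.inl hd⟩
    · rintro u v ⟨-, hu | ⟨i, rfl⟩, -⟩
      · exact Or.inl hu
      · exact Or.inr ⟨i, rfl⟩
  clear ht₀ hD₀ hatt₀ hG₀ G₀
  have ih' : ∀ (G' : SimpleGraph V) (D' : Set V), HoleOrientable G' → D' ⊂ D →
      (∀ i j, i ≠ j → G'.Adj (t i) (t j)) → IsConn G' D' → (∀ i, ∃ d ∈ D', G'.Adj (t i) d) →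
      False := by
    intro G' D' hG' hlt h1 h2 h3
    exact ih _ (hDn ▸ Set.ncard_lt_ncard hlt (Set.toFinite _)) G' hG' t D' rfl h1 h2
      (fun i h => htD i (hlt.1 h)) h3
  -- a vertex of `D` adjacent to the whole triangle gives a `K₄`, which is a wheel
  by_cases hone : ∃ d ∈ D, ∀ i, G.Adj (t i) d
  · obtain ⟨d, hd, hall⟩ := hone
    exact no_wheel hG (isHole_triangle (hall 0) (hall 2).symm (ht 2 0 (by decide)))
      (a := t 0) (d := d) (e := t 2) (b := t 1) (by simp) (by simp) (by simp)
      (ht 0 2 (by decide)).ne (hall 0) (hall 2).symm (ht 1 0 (by decide)) (hall 1)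
      (ht 1 2 (by decide))
  -- contracting an edge `xy` with `y ∈ D` and no common neighbours must destroy the configuration
  have hcontr : ∀ x y, G.Adj x y → y ∈ D → (∀ z, G.Adj x z → ¬ G.Adj y z) →
      IsConn (contract G x y) (D \ {y}) →
      (∀ i, ∃ d ∈ D \ {y}, (contract G x y).Adj (t i) d) → False := by
    intro x y hxy hy hno h1 h2
    refine ih' (contract G x y) (D \ {y}) (hG.contract hxy hno)
      (Set.ssubset_iff_subset_ne.2 ⟨Set.sdiff_subset, fun h => ?_⟩) ?_ h1 h2
    · rw [← h] at hy
      exact hy.2 rfl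
    · intro i j hij
      exact contract_adj_of_adj (ht i j hij) (fun h => htD i (h ▸ hy)) (fun h => htD j (h ▸ hy))
  -- a non-cut vertex `w` of `D` is the only neighbour in `D` of some `t i`
  have hnoncut : ∀ w ∈ D, IsConn G (D \ {w}) → ∃ i j, i ≠ j ∧ G.Adj (t i) w ∧ G.Adj (t j) w ∧
      ∀ d ∈ D, G.Adj (t i) d → d = w := by
    intro w hw hc
    have hss : D \ {w} ⊂ D := Set.ssubset_iff_subset_ne.2 ⟨Set.sdiff_subset, fun h => by
      rw [← h] at hw
      exact hw.2 rfl⟩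
    obtain ⟨i, hi⟩ : ∃ i, ∀ d ∈ D \ {w}, ¬ G.Adj (t i) d := by
      by_contra! h
      exact ih' G _ hG hss ht hc h
    have hpriv : ∀ d ∈ D, G.Adj (t i) d → d = w := fun d hd ha =>
      by_contra fun h => hi d ⟨hd, h⟩ ha
    have hiw : G.Adj (t i) w := by
      obtain ⟨d, hd, ha⟩ := hatt i
      rwa [← hpriv d hd ha]
    by_cases hno : ∀ z, G.Adj (t i) z → ¬ G.Adj w z
    · exfalso
      refine hcontr (t i) w hiw hw hno
        (hc.congr fun u hu v hv h => contract_adj_of_adj h hu.2 hv.2) fun j => ?_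
      by_cases hji : j = i
      · subst hji
        obtain ⟨r, hr⟩ := hc.1
        obtain ⟨u, hu, rfl, z, hz, hzw, ha⟩ := hD.exists_adj (P := {w}) hw rfl hr.1 hr.2
        exact ⟨z, ⟨hz, hzw⟩, (contract_adj_of_adj_right (x := t j) ha
          (fun h => htD j (h ▸ hz))).resolve_right hiw.ne⟩
      · obtain ⟨d, hd, ha⟩ := hatt j
        have hdw : d ≠ w := by
          rintro rfl
          exact hno (t j) (ht i j (Ne.symm hji)) ha.symm
        exact ⟨d, ⟨hd, hdw⟩, contract_adj_of_adj ha (fun h => htD j (h ▸ hw)) hdw⟩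
    · push Not at hno
      obtain ⟨z, hiz, hwz⟩ := hno
      rcases hsupp z _ hwz.symm with hz | ⟨j, rfl⟩
      · exact absurd (hpriv z hz hiz) hwz.ne'
      · refine ⟨i, j, ?_, hiw, hwz.symm, hpriv⟩
        rintro rfl
        exact G.irrefl hiz
  have htwo : ∀ d ∈ D, ∃ e ∈ D, e ≠ d := by
    intro d hd
    by_contra! h
    refine hone ⟨d, hd, fun i => ?_⟩
    obtain ⟨e, he, ha⟩ := hatt i
    rwa [h e he] at ha
  obtain ⟨d, hd⟩ := hD.1
  obtain ⟨e, he, hed⟩ := htwo d hd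
  obtain ⟨u, hu, -, huc⟩ := hD.exists_diff_isConn hd he hed
  obtain ⟨e', he', heu⟩ := htwo u hu
  obtain ⟨w, hw, hwu, hwc⟩ := hD.exists_diff_isConn hu he' heu
  obtain ⟨i, j, hij, hiu, hju, hpi⟩ := hnoncut u hu huc
  obtain ⟨k, l, hkl, hkw, hlw, hpk⟩ := hnoncut w hw hwc
  have hki : k ≠ i := fun h => hwu (hpi w hw (h ▸ hkw))
  have hkj : k ≠ j := by
    rintro rfl
    exact hwu (hpk u hu hju).symm
  have hli : l ≠ i := fun h => hwu (hpi w hw (h ▸ hlw))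
  have hlj : l = j := by omega
  subst hlj
  have hijk : ∀ m : Fin 3, m = i ∨ m = l ∨ m = k := by omega
  -- `D` is an induced path from `u` to `w`
  obtain ⟨P, hPD, hP⟩ := hD.exists_indPath hu hw
  have hPeq : P = D := by
    by_contra hne
    refine ih' G P hG (hPD.ssubset_of_ne hne) ht hP.isConn fun m => ?_
    rcases hijk m with rfl | rfl | rfl
    · exact ⟨u, hP.left_mem, hiu⟩
    · exact ⟨u, hP.left_mem, hju⟩
    · exact ⟨w, hP.right_mem, hkw⟩
  subst hPeq
  obtain ⟨-, hPu, -, -⟩ := hP.degrees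
  obtain ⟨v, hv, huv, hvu⟩ := hPu hwu.symm
  -- the hub `t l` is adjacent to the second vertex of the path
  have hlv : G.Adj (t l) v := by
    by_cases hno : ∀ z, G.Adj u z → ¬ G.Adj v z
    · exfalso
      refine hcontr u v huv hv hno (hD.contract hu huv.ne) fun m => ?_
      have hnev : ∀ m, t m ≠ v := fun m h => htD m (h ▸ hv)
      rcases hijk m with rfl | rfl | rfl
      · exact ⟨u, ⟨hu, huv.ne⟩, contract_adj_of_adj hiu (hnev _) huv.ne⟩
      · exact ⟨u, ⟨hu, huv.ne⟩, contract_adj_of_adj hju (hnev _) huv.ne⟩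
      · by_cases hwv : w = v
        · subst hwv
          exact ⟨u, ⟨hu, huv.ne⟩, ((contract_adj_of_adj_right (x := u) hkw.symm
            (fun h => htD m (h ▸ hu))).resolve_right huv.ne).symm⟩
        · exact ⟨w, ⟨hw, hwv⟩, contract_adj_of_adj hkw (hnev _) hwv⟩
    · push Not at hno
      obtain ⟨z, huz, hvz⟩ := hno
      rcases hsupp z _ hvz.symm with hz | ⟨m, rfl⟩
      · exact absurd (hvu z hz huz) hvz.ne'
      · rcases hijk m with rfl | rfl | rfl
        · exact absurd (hpi v hv hvz.symm) huv.ne'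
        · exact hvz.symm
        · exact absurd (hpk u hu huz.symm) hwu.symm
  -- the rim consists of the path closed up through `t i` and `t k`
  have hrim : IsHole G (insert (t k) (insert (t i) P)) := by
    refine (IndPath.cons hP (htD i) hiu (fun p hp h => hpi p hp h)).isHole_insert
      (fun h => htD i (h ▸ hw)) ?_ (ht k i hki) hkw ?_
    · rintro (h | h)
      · exact (ht k i hki).ne h
      · exact htD k h
    · rintro p (rfl | hp) hap
      · exact Or.inl rfl
      · exact Or.inr (hpk p hp hap)
  exact no_wheel hG hrim (a := t i) (d := u) (e := v) (b := t l) (by simp) (by simp [hu])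
    (by simp [hv]) (fun h => htD i (h ▸ hv)) hiu huv (ht l i hli) hju hlv

/-! ### Counting edges -/

/-- Contracting an edge `xy` without common neighbours loses only the edge `xy` itself. -/
theorem edgeSet_ncard_le_contract [Finite V] {G : SimpleGraph V} {x y : V} (hxy : G.Adj x y)
    (hno : ∀ z, G.Adj x z → ¬ G.Adj y z) :
    G.edgeSet.ncard ≤ (contract G x y).edgeSet.ncard + 1 := by
  classical
  have hne := hxy.ne
  have hlt : (G.edgeSet \ {s(x, y)}).ncard ≤ (contract G x y).edgeSet.ncard := by
    refine Set.ncard_le_ncard_of_injOn (Sym2.map fun t => if t = y then x else t) ?_ ?_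
      (Set.toFinite _)
    · intro e
      induction e with | _ u v
      rintro ⟨huv, hne'⟩
      rw [SimpleGraph.mem_edgeSet] at huv
      have := huv.ne
      have := G.adj_comm u v
      simp only [Set.mem_singleton_iff, Sym2.eq_iff] at hne'
      simp only [Sym2.map_mk, SimpleGraph.mem_edgeSet, contract]
      grind
    · intro e he e' he'
      induction e with | _ u v
      induction e' with | _ u' v'
      obtain ⟨huv, h1⟩ := he
      obtain ⟨huv', h2⟩ := he'
      rw [SimpleGraph.mem_edgeSet] at huv huv'
      simp only [Set.mem_singleton_iff, Sym2.eq_iff] at h1 h2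
      simp only [Sym2.map_mk, Sym2.eq_iff]
      have := hno u
      have := hno v
      have := hno u'
      have := hno v'
      have := huv.ne
      have := huv'.ne
      have := huv.symm
      have := huv'.symm
      grind
  have := Set.ncard_sdiff_singleton_add_one (s := G.edgeSet) (a := s(x, y)) hxy (Set.toFinite _)
  omega

theorem edge_bound_of_ncard_eq_two [Finite V] {G : SimpleGraph V} {A : Set V}
    (hA : ∀ u v, G.Adj u v → u ∈ A) (h2 : A.ncard = 2) : G.edgeSet.ncard ≤ 1 := by
  obtain ⟨a, b, -, rfl⟩ := Set.ncard_eq_two.1 h2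
  rw [← Set.ncard_singleton s(a, b)]
  refine Set.ncard_le_ncard (fun e => ?_) (Set.toFinite _)
  induction e with | _ u v
  intro huv
  rw [SimpleGraph.mem_edgeSet] at huv
  have h1 := hA u v huv
  have h2 := hA v u huv.symm
  have h3 := huv.ne
  simp only [Set.mem_insert_iff, Set.mem_singleton_iff] at h1 h2
  rw [Set.mem_singleton_iff, Sym2.eq_iff]
  grind

/-- If every edge lies in `A₁` or in `A₂`, and the edge `ab` lies in both, then counting the edges
of the two parts counts `ab` twice. -/
theorem edgeSet_ncard_add_one_le [Finite V] {G : SimpleGraph V} {A₁ A₂ : Set V} {a b : V}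
    (hab : G.Adj a b) (h1 : a ∈ A₁ ∧ b ∈ A₁) (h2 : a ∈ A₂ ∧ b ∈ A₂)
    (hcov : ∀ u v, G.Adj u v → (u ∈ A₁ ∧ v ∈ A₁) ∨ (u ∈ A₂ ∧ v ∈ A₂)) :
    G.edgeSet.ncard + 1 ≤ (restrict G A₁).edgeSet.ncard + (restrict G A₂).edgeSet.ncard := by
  rw [← Set.ncard_union_add_ncard_inter _ _ (Set.toFinite _) (Set.toFinite _)]
  refine add_le_add (Set.ncard_le_ncard (fun e => ?_) (Set.toFinite _)) ?_
  · induction e with | _ u v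
    intro huv
    exact (hcov u v huv).imp (fun h => ⟨huv, h⟩) fun h => ⟨huv, h⟩
  · exact (Set.ncard_pos (Set.toFinite _)).2 ⟨s(a, b), ⟨hab, h1⟩, ⟨hab, h2⟩⟩

/-- The edge bound for graphs all of whose edges lie in a set `A` of `n ≥ 2` vertices. -/
theorem edge_bound [Finite V] (n : ℕ) : ∀ (G : SimpleGraph V) (A : Set V), A.ncard = n →
    HoleOrientable G → (∀ u v, G.Adj u v → u ∈ A) → 2 ≤ n → G.edgeSet.ncard + 3 ≤ 2 * n := by
  induction n using Nat.strong_induction_on with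
  | _ n ih =>
  intro G A hAn hG hA hn
  rcases hn.eq_or_lt with hn2 | hn2
  · have := edge_bound_of_ncard_eq_two hA (hAn.trans hn2.symm)
    omega
  by_cases hnone : ∃ x y, G.Adj x y
  swap
  · have : G.edgeSet = ∅ := by
      refine Set.eq_empty_of_forall_notMem fun e => ?_
      induction e with | _ u v
      exact fun h => hnone ⟨u, v, h⟩
    rw [this, Set.ncard_empty]
    omega
  obtain ⟨x, y, hxy⟩ := hnone
  by_cases hno : ∀ z, G.Adj x z → ¬ G.Adj y z
  · have h1 := edgeSet_ncard_le_contract hxy hno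
    have h2 := Set.ncard_sdiff_singleton_add_one (hA y x hxy.symm) (Set.toFinite A)
    have := ih (n - 1) (by omega) (contract G x y) (A \ {y}) (by omega) (hG.contract hxy hno) ?_
      (by omega)
    · omega
    · rintro u v ⟨huy, -, -, h | h | h⟩
      · exact ⟨hA u v h, huy⟩
      · exact ⟨h.1 ▸ hA x y hxy, huy⟩
      · exact ⟨hA u y h.2, huy⟩
  push Not at hno
  obtain ⟨z, hxz, hyz⟩ := hno
  -- a set `D` closed under adjacency outside the triangle, split off along the side `ab`
  have hsplit : ∀ (a b c : V) (D : Set V), G.Adj a b → a ∉ D → b ∉ D → c ∉ D → c ≠ a → c ≠ b →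
      c ∈ A → D ⊆ A → D.Nonempty →
      (∀ u ∈ D, ∀ w ∈ A, G.Adj u w → w ∈ D ∨ w = a ∨ w = b) → G.edgeSet.ncard + 3 ≤ 2 * n := by
    intro a b c D hab haD hbD hcD hca hcb hcA hDA hDne hcl
    have haA := hA a b hab
    have hbA := hA b a hab.symm
    have e1 : (D ∪ {a, b}).ncard = D.ncard + 2 := by
      rw [Set.ncard_union_eq (by simp [haD, hbD]) (Set.toFinite _) (Set.toFinite _),
        Set.ncard_pair hab.ne]
    have e2 := Set.ncard_sdiff_add_ncard_of_subset hDA (Set.toFinite _)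
    have e3 : D.ncard + 2 < n := by
      rw [← e1, ← hAn]
      refine Set.ncard_lt_ncard (Set.ssubset_iff_subset_ne.2 ⟨?_, fun h => ?_⟩) (Set.toFinite _)
      · rintro u (hu | rfl | rfl)
        exacts [hDA hu, haA, hbA]
      · rw [← h] at hcA
        rcases hcA with h | h | h
        exacts [hcD h, hca h, hcb h]
    have e4 := (Set.ncard_pos (Set.toFinite D)).2 hDne
    have i1 := ih (D.ncard + 2) e3 (restrict G (D ∪ {a, b})) (D ∪ {a, b}) e1 (hG.restrict _)
      (fun u v h => h.2.1) (by omega)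
    have i2 := ih (A \ D).ncard (by omega) (restrict G (A \ D)) (A \ D) rfl (hG.restrict _)
      (fun u v h => h.2.1) (by omega)
    have := edgeSet_ncard_add_one_le (A₁ := D ∪ {a, b}) (A₂ := A \ D) hab (by simp)
      ⟨⟨haA, haD⟩, ⟨hbA, hbD⟩⟩ ?_
    · omega
    · intro u v huv
      have hu := hA u v huv
      have hv := hA v u huv.symm
      by_cases huD : u ∈ D
      · exact Or.inl ⟨Or.inl huD, hcl u huD v hv huv⟩
      · by_cases hvD : v ∈ D
        · exact Or.inl ⟨hcl v hvD u hu huv.symm, Or.inl hvD⟩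
        · exact Or.inr ⟨⟨hu, huD⟩, ⟨hv, hvD⟩⟩
  have hxA := hA x y hxy
  have hyA := hA y x hxy.symm
  have hzA := hA z x hxz.symm
  by_cases hT : A ⊆ {x, y, z}
  · have hn3 : n = 3 := by
      have : A.ncard ≤ ({x, y, z} : Set V).ncard := Set.ncard_le_ncard hT (Set.toFinite _)
      have := Set.ncard_insert_le x ({y, z} : Set V)
      have := Set.ncard_pair hyz.ne
      omega
    have : G.edgeSet.ncard ≤ ({s(x, y), s(x, z), s(y, z)} : Set (Sym2 V)).ncard := by
      refine Set.ncard_le_ncard (fun e => ?_) (Set.toFinite _)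
      induction e with | _ u v
      intro huv
      rw [SimpleGraph.mem_edgeSet] at huv
      have h1 := hT (hA u v huv)
      have h2 := hT (hA v u huv.symm)
      have h3 := huv.ne
      simp only [Set.mem_insert_iff, Set.mem_singleton_iff] at h1 h2
      simp only [Set.mem_insert_iff, Set.mem_singleton_iff, Sym2.eq_iff]
      grind
    have := Set.ncard_insert_le s(x, y) ({s(x, z), s(y, z)} : Set (Sym2 V))
    have := Set.ncard_insert_le s(x, z) ({s(y, z)} : Set (Sym2 V))
    have := Set.ncard_singleton s(y, z)
    omega
  obtain ⟨d, hdA, hdT⟩ := Set.not_subset.1 hT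
  obtain ⟨D, hDB, hdD, hDc, hcl⟩ := exists_maximal_isConn G (d := d) (B := A \ {x, y, z})
    ⟨hdA, hdT⟩
  have hDA : D ⊆ A := fun u hu => (hDB hu).1
  have hxD : x ∉ D := fun h => (hDB h).2 (by simp)
  have hyD : y ∉ D := fun h => (hDB h).2 (by simp)
  have hzD : z ∉ D := fun h => (hDB h).2 (by simp)
  have hcl' : ∀ u ∈ D, ∀ w ∈ A, G.Adj u w → w ∈ D ∨ w = x ∨ w = y ∨ w = z := by
    intro u hu w hw ha
    by_cases h : w ∈ ({x, y, z} : Set V)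
    · exact Or.inr h
    · exact Or.inl (hcl u hu w ⟨hw, h⟩ ha)
  by_cases h1 : ∃ d ∈ D, G.Adj x d
  swap
  · refine hsplit y z x D hyz hyD hzD hxD hxy.ne hxz.ne hxA hDA ⟨d, hdD⟩ fun u hu w hw ha => ?_
    rcases hcl' u hu w hw ha with h | rfl | h
    exacts [Or.inl h, absurd ⟨u, hu, ha.symm⟩ h1, Or.inr h]
  by_cases h2 : ∃ d ∈ D, G.Adj y d
  swap
  · refine hsplit x z y D hxz hxD hzD hyD hxy.ne' hyz.ne hyA hDA ⟨d, hdD⟩ fun u hu w hw ha => ?_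
    rcases hcl' u hu w hw ha with h | h | rfl | h
    exacts [Or.inl h, Or.inr (Or.inl h), absurd ⟨u, hu, ha.symm⟩ h2, Or.inr (Or.inr h)]
  by_cases h3 : ∃ d ∈ D, G.Adj z d
  swap
  · refine hsplit x y z D hxy hxD hyD hzD hxz.ne' hyz.ne' hzA hDA ⟨d, hdD⟩ fun u hu w hw ha => ?_
    rcases hcl' u hu w hw ha with h | h | h | rfl
    exacts [Or.inl h, Or.inr (Or.inl h), Or.inr (Or.inr h), absurd ⟨u, hu, ha.symm⟩ h3]
  refine (triangle_not_attached _ G hG ![x, y, z] D rfl ?_ hDc ?_ ?_).elim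
  · intro i j hij
    fin_cases i <;> fin_cases j <;>
      first
      | exact absurd rfl hij
      | simp [hxy, hxz, hyz, hxy.symm, hxz.symm, hyz.symm]
  · intro i
    fin_cases i
    exacts [hxD, hyD, hzD]
  · intro i
    fin_cases i
    exacts [h1, h2, h3]

end COBound


/-- A cyclically orientable finite simple graph with `n ≥ 2`
vertices has at most `2 * n - 3` edges. -/
theorem co_edge_bound {V : Type*} [Fintype V] (G : SimpleGraph V)
    (hn : 2 ≤ Fintype.card V) (hco : G.CyclicallyOrientable) :
    G.edgeSet.ncard ≤ 2 * Fintype.card V - 3 := by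
  have hcard : (Set.univ : Set V).ncard = Fintype.card V := by
    rw [Set.ncard_univ, Nat.card_eq_fintype_card]
  have := COBound.edge_bound _ G Set.univ hcard
    (COBound.holeOrientable_of_cyclicallyOrientable hco) (fun u _ _ => Set.mem_univ u) hn
  omega
end

section
/- A finite simple graph G is cyclically orientable if and only if every block of G (every maximal subgraph of G without a cut vertex, i.e., every two-connected component) is cyclically orientable. -/
/-!
A block `B` is an induced subgraph, since adding an edge between two of its vertices creates no cut
vertex (`IsBlock.adj_of_adj`). Hence a chordless cycle of `B` is a chordless cycle of `G`, and a
cyclic orientation of `G` restricts to one of `B`.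

Conversely, two blocks sharing two distinct vertices coincide, because their union has no cut
vertex (`IsBlock.eq_of_mem`), and every subgraph without cut vertex lies in a block, by finiteness
(`HasNoCutVertex.exists_isBlock`). Applied to a single edge, these facts show that every edge lies
in exactly one block, so orientations of the blocks glue to an orientation of `G`. Applied to a
cycle, which has no cut vertex (`hasNoCutVertex_of_isCycle`), they show that a chordless cycle of
`G` lies in a single block, where it is still chordless and therefore cyclically oriented.
-/

open SimpleGraph

variable {V : Type*}

namespace CyclicOrientation

variable {G : SimpleGraph V}

/-! ### Subgraphs without cut vertex -/

/-- `HasNoCutVertex` asks for connectedness after deleting a vertex of `H`; deleting a vertex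
outside `H` changes nothing, so the condition on membership can be dropped. -/
lemma HasNoCutVertex.connected_deleteVerts {H : G.Subgraph} (h : H.HasNoCutVertex) (v : V) :
    (H.deleteVerts {v}).Connected := by
  by_cases hv : v ∈ H.verts
  · exact ⟨h.2 v hv⟩
  · refine Subgraph.Connected.mono' (H := H) ?_ ?_ ⟨h.1⟩
    · intro a b hab
      refine Subgraph.deleteVerts_adj.2 ⟨hab.fst_mem, ?_, hab.snd_mem, ?_, hab⟩
      · rintro rfl; exact hv hab.fst_mem
      · rintro rfl; exact hv hab.snd_mem
    · simp [hv]

lemma HasNoCutVertex.mono {H K : G.Subgraph} (h : H.HasNoCutVertex) (hle : H ≤ K)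
    (hv : H.verts = K.verts) : K.HasNoCutVertex := by
  refine ⟨(Subgraph.Connected.mono hle hv ⟨h.1⟩).coe, fun v _ => ?_⟩
  refine (Subgraph.Connected.mono (Subgraph.deleteVerts_mono hle) ?_
    (HasNoCutVertex.connected_deleteVerts h v)).coe
  simp [hv]

/-- After deleting any vertex, at least one of the two common vertices survives and still joins
the two parts. -/
lemma HasNoCutVertex.sup {H K : G.Subgraph} (hH : H.HasNoCutVertex) (hK : K.HasNoCutVertex)
    {u v : V} (huv : u ≠ v) (huH : u ∈ H.verts) (hvH : v ∈ H.verts) (huK : u ∈ K.verts)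
    (hvK : v ∈ K.verts) : (H ⊔ K).HasNoCutVertex := by
  refine ⟨(Subgraph.connected_sup ⟨hH.1.preconnected⟩ ⟨hK.1.preconnected⟩ ⟨u, huH, huK⟩).coe,
    fun w _ => ?_⟩
  have hn : (H.deleteVerts {w} ⊓ K.deleteVerts {w}).verts.Nonempty := by
    by_cases hw : u = w
    · subst hw
      exact ⟨v, ⟨hvH, huv.symm⟩, ⟨hvK, huv.symm⟩⟩
    · exact ⟨u, ⟨huH, hw⟩, ⟨huK, hw⟩⟩
  refine (Subgraph.Connected.mono ?_ ?_ (Subgraph.connected_sup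
    (HasNoCutVertex.connected_deleteVerts hH w).preconnected
    (HasNoCutVertex.connected_deleteVerts hK w).preconnected hn)).coe
  · exact sup_le (Subgraph.deleteVerts_mono le_sup_left) (Subgraph.deleteVerts_mono le_sup_right)
  · simp [Set.union_sdiff_distrib]

lemma hasNoCutVertex_subgraphOfAdj {u v : V} (h : G.Adj u v) :
    (G.subgraphOfAdj h).HasNoCutVertex := by
  refine ⟨(Subgraph.subgraphOfAdj_connected h).coe, fun w hw => ?_⟩
  have key : ∃ x, ((G.subgraphOfAdj h).deleteVerts {w}).verts = {x} := by
    rcases hw with rfl | rfl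
    · refine ⟨v, ?_⟩
      ext x
      have := h.ne
      simp only [Subgraph.deleteVerts_verts, subgraphOfAdj_verts, Set.mem_sdiff,
        Set.mem_insert_iff, Set.mem_singleton_iff]
      grind
    · refine ⟨u, ?_⟩
      ext x
      have := h.ne
      simp only [Subgraph.deleteVerts_verts, subgraphOfAdj_verts, Set.mem_sdiff,
        Set.mem_insert_iff, Set.mem_singleton_iff]
      grind
  obtain ⟨x, hx⟩ := key
  refine (Subgraph.Connected.mono' (H := G.singletonSubgraph x) ?_ ?_
    Subgraph.singletonSubgraph_connected).coe
  · intro a b hab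
    exact hab.elim
  · rw [hx]; rfl

/-- Deleting the vertex `v` from a cycle, read as starting at `v`, leaves the path obtained by
dropping the first and the last edge. -/
lemma hasNoCutVertex_of_isCycle {v : V} {c : G.Walk v v} (hc : c.IsCycle) :
    c.toSubgraph.HasNoCutVertex := by
  classical
  refine ⟨c.toSubgraph_connected.coe, fun w hw => ?_⟩
  rw [Walk.mem_verts_toSubgraph] at hw
  rw [← Walk.toSubgraph_rotate c hw]
  have hc' := hc.rotate hw
  generalize c.rotate w hw = d at hc'
  cases d with
  | nil => exact absurd hc' Walk.not_isCycle_nil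
  | cons h p =>
    have hnil : ¬ p.Nil := Walk.not_nil_of_isCycle_cons hc'
    have hp : p.IsPath := ((Walk.cons_isCycle_iff p h).1 hc').1
    have hsupp := Walk.support_dropLast_concat hnil
    have hnot : w ∉ p.dropLast.support := by
      have hnd := hp.support_nodup
      rw [← hsupp] at hnd
      intro hmem
      simp only [List.nodup_append] at hnd
      exact hnd.2.2 w hmem w (by simp) rfl
    have hle : p.dropLast.toSubgraph ≤ (Walk.cons h p).toSubgraph := by
      refine le_trans ?_ (le_sup_right : p.toSubgraph ≤ _)
      have hadj := Walk.adj_penultimate hnil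
      conv_rhs => rw [← Walk.concat_dropLast hadj, Walk.concat_eq_append, Walk.toSubgraph_append]
      exact le_sup_left
    refine (Subgraph.Connected.mono' (H := p.dropLast.toSubgraph) ?_ ?_
      (Walk.toSubgraph_connected _)).coe
    · intro a b hab
      have hab' := hle.2 hab
      refine Subgraph.deleteVerts_adj.2 ⟨hab'.fst_mem, ?_, hab'.snd_mem, ?_, hab'⟩
      · rintro rfl; exact hnot (by simpa using hab.fst_mem)
      · rintro rfl; exact hnot (by simpa using hab.snd_mem)
    · ext x
      simp only [Walk.mem_verts_toSubgraph, Subgraph.deleteVerts_verts, Set.mem_sdiff,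
        Set.mem_singleton_iff, Walk.support_cons, List.mem_cons]
      rw [← hsupp]
      simp only [List.mem_append, List.mem_singleton]
      constructor
      · intro hx
        exact ⟨Or.inr (Or.inl hx), by rintro rfl; exact hnot hx⟩
      · tauto

/-! ### Blocks -/

lemma IsBlock.adj_of_adj {B : G.Subgraph} (hB : B.IsBlock) {u v : V} (hu : u ∈ B.verts)
    (hv : v ∈ B.verts) (h : G.Adj u v) : B.Adj u v := by
  have hverts : B.verts = (B ⊔ G.subgraphOfAdj h).verts := by
    simp [hu, hv]
  have := hB.2 (B ⊔ G.subgraphOfAdj h) le_sup_left (HasNoCutVertex.mono hB.1 le_sup_left hverts)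
  rw [← this]
  simp

lemma IsBlock.eq_of_mem {B C : G.Subgraph} (hB : B.IsBlock) (hC : C.IsBlock) {u v : V}
    (huv : u ≠ v) (huB : u ∈ B.verts) (hvB : v ∈ B.verts) (huC : u ∈ C.verts)
    (hvC : v ∈ C.verts) : B = C := by
  have h := HasNoCutVertex.sup hB.1 hC.1 huv huB hvB huC hvC
  exact (hB.2 _ le_sup_left h).symm.trans (hC.2 _ le_sup_right h)

lemma HasNoCutVertex.exists_isBlock [Finite V] {H : G.Subgraph} (h : H.HasNoCutVertex) :
    ∃ B : G.Subgraph, H ≤ B ∧ B.IsBlock := by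
  obtain ⟨B, hHB, hB⟩ := Finite.exists_le_maximal (p := fun K : G.Subgraph => K.HasNoCutVertex) h
  exact ⟨B, hHB, hB.prop, fun K hBK hK => (hB.eq_of_le hK hBK).symm⟩

/-! ### Transporting cycles and orientations -/

/-- A walk of `G` contained in the subgraph `B` lifts to a walk of `B`. -/
lemma exists_map_hom_eq {B : G.Subgraph} {u v : V} (c : G.Walk u v) (h : c.toSubgraph ≤ B) :
    ∃ (hu : u ∈ B.verts) (hv : v ∈ B.verts) (c' : B.coe.Walk ⟨u, hu⟩ ⟨v, hv⟩),
      c'.map B.hom = c := by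
  refine ⟨Set.mem_of_subset_of_mem h.1 c.start_mem_verts_toSubgraph,
    Set.mem_of_subset_of_mem h.1 c.end_mem_verts_toSubgraph,
    c.mapToSubgraph.map (Subgraph.inclusion h), ?_⟩
  exact (Walk.map_map (Subgraph.inclusion h) B.hom c.mapToSubgraph).trans
    (Walk.map_mapToSubgraph_hom c)

/-- For an induced subgraph, being a chordless cycle does not depend on the ambient graph. -/
lemma isChordlessCycle_map_hom_iff {B : G.Subgraph}
    (hB : ∀ u v, u ∈ B.verts → v ∈ B.verts → G.Adj u v → B.Adj u v)
    {v : B.verts} (c : B.coe.Walk v v) :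
    (c.map B.hom).IsChordlessCycle ↔ c.IsChordlessCycle := by
  have hinj : Function.Injective B.hom := Subgraph.hom_injective
  unfold Walk.IsChordlessCycle
  refine and_congr (Walk.isCycle_map_iff_of_injective hinj) ⟨fun h x y hx hy hxy => ?_,
    fun h x y hx hy hxy => ?_⟩
  · have := h x y (by rw [Walk.support_map]; exact List.mem_map_of_mem (f := B.hom) hx)
      (by rw [Walk.support_map]; exact List.mem_map_of_mem (f := B.hom) hy) (B.adj_sub hxy)
    rw [Walk.edges_map, List.mem_map] at this
    obtain ⟨e, he, heq⟩ := this
    have : e = s(x, y) := Sym2.map.injective hinj (by rw [heq]; rfl)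
    exact this ▸ he
  · rw [Walk.support_map, List.mem_map] at hx hy
    obtain ⟨x, hx, rfl⟩ := hx
    obtain ⟨y, hy, rfl⟩ := hy
    rw [Walk.edges_map, List.mem_map]
    exact ⟨s(x, y), h x y hx hy (hB _ _ x.2 y.2 hxy), rfl⟩

lemma isCyclicOn_map_hom_iff {B : G.Subgraph} (o : G.Orientation) (o' : B.coe.Orientation)
    (ho : ∀ u v : B.verts, B.Adj u v → (o.dir u v ↔ o'.dir u v))
    {v : B.verts} (c : B.coe.Walk v v) : o.IsCyclicOn (c.map B.hom) ↔ o'.IsCyclicOn c := by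
  unfold Orientation.IsCyclicOn
  rw [Walk.darts_map]
  simp only [List.forall_mem_map]
  refine or_congr (forall₂_congr fun d _ => ho _ _ d.adj)
    (forall₂_congr fun d _ => ho _ _ d.adj.symm)

end CyclicOrientation

open CyclicOrientation in
/-- A finite simple graph is cyclically orientable if and only if
every block of it is cyclically orientable. -/
theorem co_iff_all_blocks_co {V : Type*} [Fintype V] (G : SimpleGraph V) :
    G.CyclicallyOrientable ↔
      ∀ B : G.Subgraph, B.IsBlock → B.coe.CyclicallyOrientable := by
  constructor
  · rintro ⟨o, ho⟩ B hB
    let o' : B.coe.Orientation :=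
      { dir := fun u v => o.dir u v
        dir_adj := fun u v h => IsBlock.adj_of_adj hB u.2 v.2 (o.dir_adj _ _ h)
        adj_iff_dir := fun u v h => o.adj_iff_dir _ _ (B.adj_sub h) }
    refine ⟨o', fun v c hc => ?_⟩
    rw [← isChordlessCycle_map_hom_iff fun _ _ hu hv => IsBlock.adj_of_adj hB hu hv] at hc
    exact (isCyclicOn_map_hom_iff o o' (fun _ _ _ => Iff.rfl) c).1 (ho _ _ hc)
  · intro h
    choose oB hoB using h
    -- By uniqueness of the block through an edge, the direction is the one given by any such block.
    have key : ∀ (B : G.Subgraph) (hB : B.IsBlock) (u v : B.verts), u ≠ v →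
        ((∃ (C : G.Subgraph) (hC : C.IsBlock) (hu : u.1 ∈ C.verts) (hv : v.1 ∈ C.verts),
          (oB C hC).dir ⟨u, hu⟩ ⟨v, hv⟩) ↔ (oB B hB).dir u v) := by
      rintro B hB ⟨u, hu⟩ ⟨v, hv⟩ huv
      constructor
      · rintro ⟨C, hC, hu', hv', hd⟩
        obtain rfl := IsBlock.eq_of_mem hB hC (fun e => huv (Subtype.ext e)) hu hv hu' hv'
        exact hd
      · exact fun hd => ⟨B, hB, hu, hv, hd⟩
    let o : G.Orientation :=
      { dir := fun u v => ∃ (C : G.Subgraph) (hC : C.IsBlock) (hu : u ∈ C.verts)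
          (hv : v ∈ C.verts), (oB C hC).dir ⟨u, hu⟩ ⟨v, hv⟩
        dir_adj := by
          rintro u v ⟨C, hC, hu, hv, hd⟩
          exact C.adj_sub ((oB C hC).dir_adj _ _ hd)
        adj_iff_dir := by
          intro u v huv
          obtain ⟨B, hle, hB⟩ := HasNoCutVertex.exists_isBlock (hasNoCutVertex_subgraphOfAdj huv)
          have hu : u ∈ B.verts := hle.1 (by simp)
          have hv : v ∈ B.verts := hle.1 (by simp)
          have hne : (⟨u, hu⟩ : B.verts) ≠ ⟨v, hv⟩ := fun e => huv.ne (congrArg Subtype.val e)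
          rw [key B hB ⟨u, hu⟩ ⟨v, hv⟩ hne, key B hB ⟨v, hv⟩ ⟨u, hu⟩ hne.symm]
          exact (oB B hB).adj_iff_dir _ _ (IsBlock.adj_of_adj hB hu hv huv) }
    refine ⟨o, fun v c hc => ?_⟩
    obtain ⟨B, hle, hB⟩ := HasNoCutVertex.exists_isBlock (hasNoCutVertex_of_isCycle hc.1)
    obtain ⟨_, _, c', rfl⟩ := exists_map_hom_eq c hle
    refine (isCyclicOn_map_hom_iff o (oB B hB)
      (fun x y hxy => key B hB x y fun e => hxy.ne (congrArg Subtype.val e)) c').2 ?_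
    exact hoB B hB _ c' ((isChordlessCycle_map_hom_iff
      (fun _ _ hu hv => IsBlock.adj_of_adj hB hu hv) c').1 hc)
end

section
/- A two-connected finite simple graph G is cyclically orientable if and only if G is a single edge, or G is a cycle, or G can be written as G' ∪ C where G' is a cyclically orientable graph, C is a cycle, and G' and C meet along exactly one common edge (their intersection consists of one edge and its two endpoints). -/
/-!
Call two neighbours `a`, `b` of a vertex `u` *linked* at `u` if a walk joins them that avoids `u`
and all other neighbours of `u`. A shortest such walk closes up through `u` to a chordless cycle, so
a cyclic orientation directs exactly one of the edges `ua`, `ub` into `u` (`Linked.dir_iff`). In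
particular three neighbours of a vertex are never pairwise linked (`not_three_linked`).

This bounds degrees in a cyclically orientable graph without separating edges (edges whose two ends
disconnect the graph). Let `u` have a neighbour `a` and at least two further neighbours. Every
neighbour `b ≠ u` of `a` reaches, in `G - u - a`, a first neighbour of `u`, its *exit*; the exit is
unique, since two distinct exits and `a` would be pairwise linked at `u` (`Exit.unique`). Different
exits do occur, so some two neighbours `b`, `c` of `a` with different exits are linked at `a`
(`exists_linked_distinct_exits`), and then `b`, `c`, `u` are pairwise linked at `a`
(`linked_center`), which is impossible. Hence no vertex has three neighbours (`no_three_neighbors`).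

For the decomposition, a *flap* at an edge `xy` is a nonempty set `P` of vertices whose neighbours
outside `P` are `x` or `y`. If `P` is a flap of minimal size in a two-connected graph, the graph
induced on `P ∪ {x, y}` has no separating edge, because such an edge would cut off a smaller flap.
It is also connected, cyclically orientable and of minimum degree at least two, so it is a cycle
(`isCycleGraph_of_minimal`). The cycle to be split off is this graph, and the rest is `G - P`.

Conversely, if a cycle `C` is glued to `G'` along `xy`, a chordless cycle cannot visit both sides,
as `xy` would be a chord (`chordless_side`). Thus it suffices to orient `C` cyclically so as to
agree with `G'` on the edge `xy` (`cyclicallyOrientable_of_glue`).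
-/

open SimpleGraph

variable {V : Type*}

namespace CyclicOrient

open SimpleGraph

/-! ### Walks inside a vertex set -/

/-- `b` can be reached from `a` by a walk of `G` all of whose vertices (endpoints included)
lie in `S`. -/
def ReachIn (G : SimpleGraph V) (S : Set V) (a b : V) : Prop :=
  ∃ w : G.Walk a b, ∀ x ∈ w.support, x ∈ S

section Reach

variable {G : SimpleGraph V} {S T : Set V} {a b c : V}

lemma ReachIn.refl (h : a ∈ S) : ReachIn G S a a :=
  ⟨Walk.nil, by simpa using h⟩

lemma ReachIn.symm (h : ReachIn G S a b) : ReachIn G S b a := by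
  obtain ⟨w, hw⟩ := h
  exact ⟨w.reverse, by simpa using hw⟩

lemma ReachIn.trans (h : ReachIn G S a b) (h' : ReachIn G S b c) : ReachIn G S a c := by
  obtain ⟨w, hw⟩ := h
  obtain ⟨w', hw'⟩ := h'
  refine ⟨w.append w', fun x hx => ?_⟩
  rcases (Walk.mem_support_append_iff _ _).1 hx with h | h
  exacts [hw _ h, hw' _ h]

lemma ReachIn.mono (hST : S ⊆ T) (h : ReachIn G S a b) : ReachIn G T a b := by
  obtain ⟨w, hw⟩ := h
  exact ⟨w, fun x hx => hST (hw x hx)⟩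

lemma ReachIn.left (h : ReachIn G S a b) : a ∈ S := by
  obtain ⟨w, hw⟩ := h
  exact hw _ w.start_mem_support

lemma ReachIn.right (h : ReachIn G S a b) : b ∈ S := h.symm.left

lemma ReachIn.of_adj (hab : G.Adj a b) (ha : a ∈ S) (hb : b ∈ S) : ReachIn G S a b :=
  ⟨hab.toWalk, by simp [ha, hb]⟩

/-- A walk in `S` ending in `T` can be stopped at the first vertex of `T` it meets. -/
lemma ReachIn.first_hit (h : ReachIn G S a b) (hb : b ∈ T) :
    ∃ t ∈ T, ReachIn G {x | x ∈ S ∧ (x ∈ T → x = t)} a t := by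
  obtain ⟨w, hw⟩ := h
  induction w with
  | nil => exact ⟨_, hb, ReachIn.refl ⟨hw _ (by simp), fun _ => rfl⟩⟩
  | @cons u v w huv p ih =>
    by_cases hu : u ∈ T
    · exact ⟨u, hu, ReachIn.refl ⟨hw _ (by simp), fun _ => rfl⟩⟩
    · obtain ⟨t, ht, hr⟩ := ih hb (fun x hx => hw x (by simp [hx]))
      exact ⟨t, ht, ReachIn.trans (ReachIn.of_adj huv ⟨hw _ (by simp), fun h => absurd h hu⟩ hr.left) hr⟩

/-- The last visit to the starting vertex `a` can be taken as the new start: a walk in `S`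
from `a` to `b ≠ a` yields a neighbour of `a` from which `b` is reached inside `S` without `a`. -/
lemma ReachIn.exists_adj (h : ReachIn G S a b) (hab : a ≠ b) :
    ∃ c, G.Adj a c ∧ ReachIn G {x | x ∈ S ∧ x ≠ a} c b := by
  classical
  obtain ⟨w, hw⟩ := h
  have hp := w.bypass_isPath
  have hs : ∀ x ∈ w.bypass.support, x ∈ S := fun x hx => hw x (w.support_bypass_subset_support hx)
  revert hp hs
  generalize w.bypass = p
  intro hp hs
  cases p with
  | nil => exact absurd rfl hab
  | @cons _ v _ huv p =>
    rw [Walk.cons_isPath_iff] at hp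
    exact ⟨v, huv, p, fun x hx => ⟨hs x (by simp [hx]), fun h => hp.2 (h ▸ hx)⟩⟩

/-- A walk of minimal length inside `S` is an induced path. -/
lemma ReachIn.exists_induced_path (h : ReachIn G S a b) :
    ∃ w : G.Walk a b, w.IsPath ∧ (∀ x ∈ w.support, x ∈ S) ∧
      ∀ x y, x ∈ w.support → y ∈ w.support → G.Adj x y → s(x, y) ∈ w.edges := by
  classical
  have hex : ∃ n, ∃ w : G.Walk a b, (∀ x ∈ w.support, x ∈ S) ∧ w.length = n := by
    obtain ⟨w, hw⟩ := h
    exact ⟨_, w, hw, rfl⟩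
  obtain ⟨w₀, hw₀, hl⟩ := Nat.find_spec hex
  have hmin : ∀ w : G.Walk a b, (∀ x ∈ w.support, x ∈ S) → w₀.bypass.length ≤ w.length := by
    intro w hw
    have := w₀.length_bypass_le_length
    have := Nat.find_min' hex ⟨w, hw, rfl⟩
    omega
  have hS : ∀ x ∈ w₀.bypass.support, x ∈ S :=
    fun x hx => hw₀ x (w₀.support_bypass_subset_support hx)
  refine ⟨w₀.bypass, w₀.bypass_isPath, hS, ?_⟩
  revert hmin hS
  generalize w₀.bypass = w
  intro hmin hS
  -- A chord from index `i` to index `j > i + 1` would give a shortcut.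
  have key : ∀ i j, i < j → j ≤ w.length → G.Adj (w.getVert i) (w.getVert j) →
      s(w.getVert i, w.getVert j) ∈ w.edges := by
    intro i j hij hj hadj
    have hle := hmin ((w.take i).append (Walk.cons hadj (w.drop j))) (by
      intro x hx
      rw [Walk.mem_support_append_iff, Walk.support_cons, List.mem_cons, Walk.support_take,
        Walk.drop_support_eq_support_drop_min] at hx
      rcases hx with h | h | h
      · exact hS x (List.mem_of_mem_take h)
      · exact h ▸ hS _ (w.getVert_mem_support i)
      · exact hS x (List.mem_of_mem_drop h))
    rw [Walk.length_append, Walk.length_cons, Walk.take_length, Walk.drop_length] at hle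
    have hj' : j = i + 1 := by
      rw [min_eq_left (by omega)] at hle
      omega
    subst hj'
    rw [← Walk.adj_toSubgraph_iff_mem_edges, Walk.toSubgraph_adj_iff]
    exact ⟨i, rfl, by omega⟩
  intro x y hx hy hxy
  obtain ⟨i, rfl, hi⟩ := Walk.mem_support_iff_exists_getVert.1 hx
  obtain ⟨j, rfl, hj⟩ := Walk.mem_support_iff_exists_getVert.1 hy
  rcases lt_trichotomy i j with h | h | h
  · exact key i j h hj hxy
  · subst h
    exact absurd hxy (G.loopless.irrefl _)
  · rw [Sym2.eq_swap]
    exact key j i h hi hxy.symm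

end Reach

/-! ### The local structure at a vertex of a cyclically orientable graph -/

/-- Two neighbours `a`, `b` of `u` are linked at `u` if they are joined by a walk that avoids `u`
and all other neighbours of `u`; equivalently, some chordless cycle passes through `a, u, b`. -/
def Linked (G : SimpleGraph V) (u a b : V) : Prop :=
  ReachIn G {x | x ≠ u ∧ (G.Adj u x → x = a ∨ x = b)} a b

lemma Linked.symm {G : SimpleGraph V} {u a b : V} (h : Linked G u a b) : Linked G u b a :=
  (ReachIn.symm h).mono fun _ hx => ⟨hx.1, fun h => (hx.2 h).symm⟩

/-- If `a` and `b` are linked at `u`, exactly one of the edges `ua`, `ub` points into `u`. -/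
lemma Linked.dir_iff {G : SimpleGraph V} {o : G.Orientation}
    (ho : ∀ (v : V) (c : G.Walk v v), c.IsChordlessCycle → o.IsCyclicOn c)
    {u a b : V} (h : Linked G u a b) (ha : G.Adj u a) (hb : G.Adj u b) (hab : a ≠ b) :
    o.dir a u ↔ ¬ o.dir b u := by
  obtain ⟨w, hp, hS, hch⟩ := ReachIn.exists_induced_path h
  have hu : u ∉ w.support := fun h => (hS u h).1 rfl
  have hcyc : (Walk.cons ha (w.concat hb.symm)).IsChordlessCycle := by
    constructor
    · rw [Walk.cons_isCycle_iff]
      refine ⟨hp.concat hu _, ?_⟩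
      rw [Walk.edges_concat, List.concat_eq_append, List.mem_append, List.mem_singleton]
      rintro (h | h)
      · exact hu (w.fst_mem_support_of_mem_edges h)
      · have := ha.ne
        simp at h
        grind
    · intro x y hx hy hxy
      have hmem : ∀ z, z ∈ (Walk.cons ha (w.concat hb.symm)).support → z = u ∨ z ∈ w.support := by
        intro z hz
        simp [Walk.support_concat] at hz
        tauto
      have hedge : ∀ z, z ∈ w.support → G.Adj u z →
          s(u, z) ∈ (Walk.cons ha (w.concat hb.symm)).edges := by
        intro z hz huz
        rcases (hS z hz).2 huz with rfl | rfl
        · simp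
        · simp [Walk.edges_concat, Sym2.eq_swap]
      rcases hmem x hx with rfl | hx' <;> rcases hmem y hy with rfl | hy'
      · exact absurd hxy (G.loopless.irrefl _)
      · exact hedge y hy' hxy
      · rw [Sym2.eq_swap]
        exact hedge x hx' hxy.symm
      · simp [Walk.edges_concat, hch x y hx' hy' hxy]
  have h1 : (⟨(u, a), ha⟩ : G.Dart) ∈ (Walk.cons ha (w.concat hb.symm)).darts := by simp
  have h2 : (⟨(b, u), hb.symm⟩ : G.Dart) ∈ (Walk.cons ha (w.concat hb.symm)).darts := by
    simp [Walk.darts_concat]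
  have hau := o.adj_iff_dir u a ha
  have hbu := o.adj_iff_dir u b hb
  rcases ho _ _ hcyc with h | h
  · have := h _ h1
    have := h _ h2
    simp_all
  · have := h _ h1
    have := h _ h2
    simp_all

/-- Three neighbours of a vertex cannot be pairwise linked: each pair must have one edge pointing
in and one pointing out. -/
lemma not_three_linked {G : SimpleGraph V} (hG : G.CyclicallyOrientable) {u a b c : V}
    (ha : G.Adj u a) (hb : G.Adj u b) (hc : G.Adj u c) (hab : a ≠ b) (hac : a ≠ c) (hbc : b ≠ c)
    (h1 : Linked G u a b) (h2 : Linked G u a c) (h3 : Linked G u b c) : False := by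
  obtain ⟨o, ho⟩ := hG
  have := h1.dir_iff ho ha hb hab
  have := h2.dir_iff ho ha hc hac
  have := h3.dir_iff ho hb hc hbc
  tauto

/-- `Exit G u a b d`: `d ≠ a` is a neighbour of `u` that is reached from `b` by a walk avoiding `u`
and having no neighbour of `u` other than its last vertex `d`. -/
def Exit (G : SimpleGraph V) (u a b d : V) : Prop :=
  G.Adj u d ∧ d ≠ a ∧ ReachIn G {x | x ≠ u ∧ (G.Adj u x → x = d)} b d

section Degree

variable {G : SimpleGraph V} {u a : V}

lemma Exit.eq_of_adj {b d : V} (h : Exit G u a b d) (hb : G.Adj u b) : b = d :=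
  h.2.2.left.2 hb

/-- The exit of a neighbour `b` of `a` is unique, as otherwise `a` and two distinct exits would be
pairwise linked at `u`. -/
lemma Exit.unique (hG : G.CyclicallyOrientable) (hua : G.Adj u a) {b d e : V} (hab : G.Adj a b)
    (hd : Exit G u a b d) (he : Exit G u a b e) : d = e := by
  by_contra hde
  by_cases hub : G.Adj u b
  · exact hde ((hd.eq_of_adj hub).symm.trans (he.eq_of_adj hub))
  have key : ∀ f, Exit G u a b f → Linked G u a f := by
    intro f hf
    have hr : ReachIn G {x | x ≠ u ∧ (G.Adj u x → x = a ∨ x = f)} b f :=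
      hf.2.2.mono fun x hx => ⟨hx.1, fun h => Or.inr (hx.2 h)⟩
    exact ReachIn.trans (ReachIn.of_adj hab ⟨hua.ne', fun _ => Or.inl rfl⟩ hr.left) hr
  refine not_three_linked hG hua hd.1 he.1 hd.2.1.symm he.2.1.symm hde (key d hd) (key e he) ?_
  exact ReachIn.trans (hd.2.2.symm.mono fun x hx => ⟨hx.1, fun h => Or.inl (hx.2 h)⟩)
    (he.2.2.mono fun x hx => ⟨hx.1, fun h => Or.inr (hx.2 h)⟩)

/-- `G` has no separating edge: deleting both endpoints of an edge leaves a (pre)connected graph. -/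
def NoSepEdge (G : SimpleGraph V) : Prop :=
  ∀ u a, G.Adj u a → ∀ z w, z ≠ u → z ≠ a → w ≠ u → w ≠ a →
    ReachIn G {x | x ≠ u ∧ x ≠ a} z w

lemma exists_exit (hs : NoSepEdge G) (hua : G.Adj u a) {d : V} (hd : G.Adj u d) (hda : d ≠ a)
    {b : V} (hbu : b ≠ u) (hba : b ≠ a) : ∃ e, Exit G u a b e := by
  obtain ⟨t, ht, hr⟩ := (hs u a hua b d hbu hba hd.ne' hda).first_hit (T := {x | G.Adj u x}) hd
  exact ⟨t, ht, hr.right.1.2, hr.mono fun x hx => ⟨hx.1.1, hx.2⟩⟩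

/-- If `u` has a third neighbour `d'`, then for every neighbour `d ≠ a` of `u` some neighbour of
`a` has an exit other than `d`. -/
lemma exists_exit_ne (hs : NoSepEdge G) (hua : G.Adj u a) {d d' : V} (hd : G.Adj u d)
    (hd' : G.Adj u d') (hda : d ≠ a) (hda' : d' ≠ a) (hdd : d' ≠ d) :
    ∃ b e, G.Adj a b ∧ b ≠ u ∧ Exit G u a b e ∧ e ≠ d := by
  obtain ⟨b, hab, hr⟩ := (hs u d hd a d' hua.ne' hda.symm hd'.ne' hdd).exists_adj hda'.symm
  obtain ⟨t, ht, hr'⟩ := hr.first_hit (T := {x | G.Adj u x}) hd'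
  exact ⟨b, t, hab, hr.left.1.1, ⟨ht, hr'.right.1.2, hr'.mono fun x hx => ⟨hx.1.1.1, hx.2⟩⟩,
    hr'.right.1.1.2⟩

/-- Along a walk in `G - u - a` between neighbours of `a` with distinct exits there are two
neighbours of `a`, consecutive among those on the walk, with distinct exits. -/
lemma exists_linked_distinct_exits (hs : NoSepEdge G) (hua : G.Adj u a) (n : ℕ) :
    ∀ (b c d e : V), G.Adj a b → G.Adj a c → Exit G u a b d → Exit G u a c e → d ≠ e →
      ∀ w : G.Walk b c, (∀ x ∈ w.support, x ≠ u ∧ x ≠ a) → w.length = n →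
      ∃ b c d e, G.Adj a b ∧ G.Adj a c ∧ Exit G u a b d ∧ Exit G u a c e ∧ d ≠ e ∧
        ReachIn G {x | (x ≠ u ∧ x ≠ a) ∧ (G.Adj a x → x = b ∨ x = c)} b c := by
  classical
  induction n using Nat.strong_induction_on with
  | _ n ih =>
    intro b c d e hab hac hbd hce hde w hw hn
    by_cases hr : ∃ r ∈ w.support, G.Adj a r ∧ r ≠ b ∧ r ≠ c
    · obtain ⟨r, hr, har, hrb, hrc⟩ := hr
      obtain ⟨f, hf⟩ := exists_exit hs hua hbd.1 hbd.2.1 (hw r hr).1 (hw r hr).2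
      by_cases hfd : f = d
      · subst hfd
        exact ih _ (hn ▸ Walk.length_dropUntil_lt_length hr hrb) r c f e har hac hf hce hde
          (w.dropUntil r hr) (fun x hx => hw x (w.support_dropUntil_subset_support hr hx)) rfl
      · exact ih _ (hn ▸ Walk.length_takeUntil_lt_length hr hrc) b r d f hab har hbd hf
          (Ne.symm hfd)
          (w.takeUntil r hr) (fun x hx => hw x (w.support_takeUntil_subset_support hr hx)) rfl
    · push Not at hr
      refine ⟨b, c, d, e, hab, hac, hbd, hce, hde, w, fun x hx => ⟨hw x hx, fun hax => ?_⟩⟩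
      by_cases hxb : x = b
      · exact Or.inl hxb
      · exact Or.inr (hr x hx hax hxb)

/-- A neighbour `b` of `a` that is linked at `a` to a neighbour `c` with a different exit is also
linked at `a` to `u`: the linking walk has to pass through the exit of `b`. -/
lemma linked_center (hG : G.CyclicallyOrientable) (hua : G.Adj u a) {b c d e : V}
    (hab : G.Adj a b) (hac : G.Adj a c) (hbd : Exit G u a b d)
    (hce : Exit G u a c e) (hde : d ≠ e)
    (hr : ReachIn G {x | (x ≠ u ∧ x ≠ a) ∧ (G.Adj a x → x = b ∨ x = c)} b c) :
    Linked G a b u := by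
  classical
  obtain ⟨w, hw⟩ := hr
  by_cases hit : ∃ t ∈ w.support, G.Adj u t
  · obtain ⟨t, ht, hut⟩ := hit
    have hr : ReachIn G {x | (x ≠ u ∧ x ≠ a) ∧ (G.Adj a x → x = b ∨ x = c)} b t :=
      ⟨w.takeUntil t ht, fun x hx => hw x (w.support_takeUntil_subset_support ht hx)⟩
    obtain ⟨f, hf, hrf⟩ := hr.first_hit (T := {x | G.Adj u x}) hut
    have hbf : Exit G u a b f := ⟨hf, hrf.right.1.1.2, hrf.mono fun x hx => ⟨hx.1.1.1, hx.2⟩⟩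
    have hdf := Exit.unique hG hua hab hbd hbf
    obtain ⟨p, hp⟩ := hrf
    -- The exit of `b` is `f`; if `c` lay on `p`, then `f` would be the exit of `c` as well.
    have hcp : c ∉ p.support := by
      intro hcp
      have hcf : Exit G u a c f := ⟨hf, hbf.2.1, p.dropUntil c hcp, fun x hx =>
        have hx' := hp x (p.support_dropUntil_subset_support hcp hx)
        ⟨hx'.1.1.1, hx'.2⟩⟩
      exact hde (hdf.trans (Exit.unique hG hua hac hcf hce))
    have hbf' : ReachIn G {x | x ≠ a ∧ (G.Adj a x → x = b ∨ x = u)} b f := by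
      refine ⟨p, fun x hx => ⟨(hp x hx).1.1.2, fun hax => Or.inl ?_⟩⟩
      exact ((hp x hx).1.2 hax).resolve_right fun h => hcp (h ▸ hx)
    exact hbf'.trans (ReachIn.of_adj hf.symm hbf'.right ⟨hua.ne, fun _ => Or.inr rfl⟩)
  · push Not at hit
    -- A walk missing the neighbourhood of `u` would make `e` an exit of `b`.
    have hbe : Exit G u a b e := by
      refine ⟨hce.1, hce.2.1, ReachIn.trans (b := c) ⟨w, fun x hx => ⟨(hw x hx).1.1, ?_⟩⟩ hce.2.2⟩
      exact fun h => absurd h (hit x hx)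
    exact absurd (Exit.unique hG hua hab hbd hbe) hde

/-- In a cyclically orientable graph without separating edges no vertex has three neighbours. -/
lemma no_three_neighbors (hG : G.CyclicallyOrientable) (hs : NoSepEdge G) {d d' : V}
    (ha : G.Adj u a) (hd : G.Adj u d) (hd' : G.Adj u d') (hda : d ≠ a) (hda' : d' ≠ a)
    (hdd : d' ≠ d) : False := by
  obtain ⟨b, e, hab, hbu, hbe, hed⟩ := exists_exit_ne hs ha hd hd' hda hda' hdd
  obtain ⟨c, f, hac, hcu, hcf, hfe⟩ := exists_exit_ne hs ha hbe.1 hd hbe.2.1 hda hed.symm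
  obtain ⟨w, hw⟩ := hs u a ha b c hbu hab.ne' hcu hac.ne'
  obtain ⟨b, c, e, f, hab, hac, hbe, hcf, hef, hr⟩ := exists_linked_distinct_exits hs ha _ b c e f
    hab hac hbe hcf hfe.symm w hw rfl
  have hbc : b ≠ c := by
    rintro rfl
    exact hef (Exit.unique hG ha hab hbe hcf)
  have hb := linked_center hG ha hab hac hbe hcf hef hr
  have hc := linked_center hG ha hac hab hcf hbe hef.symm
    (hr.symm.mono fun x hx => ⟨hx.1, fun h => (hx.2 h).symm⟩)
  exact not_three_linked hG hab hac ha.symm hbc hr.left.1.1 hr.right.1.1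
    (hr.mono fun x hx => ⟨hx.1.2, hx.2⟩) hb hc

end Degree

/-! ### Graphs without separating edges are cycles -/

/-- A finite connected graph in which every vertex has exactly two neighbours is a cycle. -/
lemma isCycleGraph_of_two_neighbors [Finite V] {G : SimpleGraph V} (hc : G.Preconnected) (v : V)
    (h : ∀ u, ∃ a b, a ≠ b ∧ G.neighborSet u = {a, b}) : G.IsCycleGraph := by
  have hcyc : G.IsCycles := by
    intro u _
    obtain ⟨a, b, hab, hu⟩ := h u
    rw [hu, Set.ncard_pair hab]
  obtain ⟨c, hcc, hsupp⟩ := hcyc.exists_cycle_toSubgraph_verts_eq_connectedComponentSupp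
    (v := v) (c := G.connectedComponentMk v) rfl (by
      obtain ⟨a, b, _, hu⟩ := h v
      exact ⟨a, by simp [hu]⟩)
  have hall : ∀ w, w ∈ c.support := by
    intro w
    rw [← Walk.mem_verts_toSubgraph, hsupp]
    exact ConnectedComponent.sound (hc w v)
  refine ⟨v, c, hcc, hall, fun e => ?_⟩
  induction e with
  | _ x y =>
    intro hxy
    rw [mem_edgeSet] at hxy
    rw [← Walk.adj_toSubgraph_iff_mem_edges]
    -- The cycle already contains two edges at `x`.
    have heq : c.toSubgraph.neighborSet x = G.neighborSet x := by
      refine Set.eq_of_subset_of_ncard_le (Subgraph.neighborSet_subset _ _) ?_ (Set.toFinite _)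
      rw [hcc.ncard_neighborSet_toSubgraph_eq_two (hall x), hcyc ⟨y, hxy⟩]
    exact (Set.ext_iff.1 heq y).2 hxy

/-! ### Minimal flaps -/

/-- A flap of `G` at the edge `xy`: a nonempty set `P` of vertices other than `x`, `y` all of whose
neighbours outside `P` are `x` or `y`, i.e. a nonempty union of components of `G - x - y`. -/
structure IsFlap (G : SimpleGraph V) (x y : V) (P : Set V) : Prop where
  adj : G.Adj x y
  nonempty : P.Nonempty
  left : x ∉ P
  right : y ∉ P
  closed : ∀ p ∈ P, ∀ q, G.Adj p q → q ∈ P ∨ q = x ∨ q = y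

/-- In a two-connected graph, a nonempty set `Q` of vertices avoiding `v` whose neighbours all lie
in `Q ∪ {v}` contains every vertex other than `v`. -/
lemma mem_of_closed {G : SimpleGraph V} (h2 : G.IsTwoConnected) {v : V} {Q : Set V}
    (hne : Q.Nonempty) (hv : v ∉ Q) (hQ : ∀ p ∈ Q, ∀ q, G.Adj p q → q ∈ Q ∨ q = v) {w : V}
    (hw : w ≠ v) : w ∈ Q := by
  obtain ⟨p, hp⟩ := hne
  obtain ⟨W⟩ := (h2.2 v).preconnected ⟨p, fun h => hv (h ▸ hp)⟩ ⟨w, hw⟩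
  have key : ∀ (s t : {w : V | w ≠ v}), (G.induce {w : V | w ≠ v}).Walk s t → s.1 ∈ Q → t.1 ∈ Q := by
    intro s t W
    induction W with
    | nil => exact id
    | @cons _ t _ h _ ih => exact fun hs => ih ((hQ _ hs _ h).resolve_right t.2)
  exact key _ _ W hp

/-- An induced subgraph of a cyclically orientable graph is cyclically orientable. -/
lemma coe_cyclicallyOrientable {G : SimpleGraph V} (hG : G.CyclicallyOrientable) (H : G.Subgraph)
    (hH : ∀ a ∈ H.verts, ∀ b ∈ H.verts, G.Adj a b → H.Adj a b) : H.coe.CyclicallyOrientable := by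
  obtain ⟨o, ho⟩ := hG
  refine ⟨⟨fun a b => o.dir a b, fun a b h => hH _ a.2 _ b.2 (o.dir_adj _ _ h),
    fun a b h => o.adj_iff_dir _ _ (H.adj_sub h)⟩, fun v c hc => ?_⟩
  have hc' : (c.map H.hom).IsChordlessCycle := by
    refine ⟨(Walk.isCycle_map_iff_of_injective Subgraph.hom_injective).2 hc.1, ?_⟩
    intro u w hu hw huw
    rw [Walk.support_map, List.mem_map] at hu hw
    obtain ⟨u, hu, rfl⟩ := hu
    obtain ⟨w, hw, rfl⟩ := hw
    rw [Walk.edges_map, List.mem_map]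
    exact ⟨s(u, w), hc.2 u w hu hw (hH _ u.2 _ w.2 huw), rfl⟩
  rcases ho _ _ hc' with h | h
  · refine Or.inl fun d hd => h (H.hom.mapDart d) ?_
    rw [Walk.darts_map]
    exact List.mem_map_of_mem hd
  · refine Or.inr fun d hd => h (H.hom.mapDart d) ?_
    rw [Walk.darts_map]
    exact List.mem_map_of_mem hd

section Flap

variable {G : SimpleGraph V} {x y : V} {P : Set V}

/-- The subgraph induced by a flap together with its two attaching vertices. -/
abbrev flapGraph (G : SimpleGraph V) (x y : V) (P : Set V) : G.Subgraph :=
  (⊤ : G.Subgraph).induce (P ∪ {x, y})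

lemma flapGraph_adj {a b : V} : (flapGraph G x y P).Adj a b ↔
    a ∈ P ∪ {x, y} ∧ b ∈ P ∪ {x, y} ∧ G.Adj a b := by
  simp [flapGraph]

/-- If `P` is a minimal flap, the part of its closure reached from `z` after deleting an edge `uv`
is everything, provided that it contains neither `x` nor `y`: otherwise that part is a smaller
flap, attached at `uv`. -/
lemma reach_of_minimal [Finite V] (hP : IsFlap G x y P)
    (hmin : ∀ x' y' Q, IsFlap G x' y' Q → P.ncard ≤ Q.ncard)
    {u v z w : (flapGraph G x y P).verts} (huv : (flapGraph G x y P).coe.Adj u v)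
    (hzu : z ≠ u) (hzv : z ≠ v) (hwu : w ≠ u) (hwv : w ≠ v)
    (hx : ∀ t, ReachIn (flapGraph G x y P).coe {s | s ≠ u ∧ s ≠ v} z t → t.1 ≠ x ∧ t.1 ≠ y) :
    ReachIn (flapGraph G x y P).coe {s | s ≠ u ∧ s ≠ v} z w := by
  by_contra hzw
  set Q : Set V := {q | ∃ h, ReachIn (flapGraph G x y P).coe {s | s ≠ u ∧ s ≠ v} z ⟨q, h⟩} with hQdef
  have hQP : Q ⊆ P := by
    rintro q ⟨h, hq⟩
    have := hx _ hq
    have h' : q ∈ P ∪ {x, y} := h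
    simp at h' this
    tauto
  have hflap : IsFlap G u v Q := by
    refine ⟨(flapGraph_adj.1 huv).2.2, ⟨z, z.2, ReachIn.refl ⟨hzu, hzv⟩⟩, ?_, ?_, ?_⟩
    · rintro ⟨h, hq⟩
      exact hq.right.1 rfl
    · rintro ⟨h, hq⟩
      exact hq.right.2 rfl
    · intro p hp q hpq
      have hqV : q ∈ (flapGraph G x y P).verts := by
        have := hP.closed p (hQP hp) q hpq
        simpa [or_comm, or_assoc] using this
      obtain ⟨hpV, hpr⟩ := hp
      by_cases hqu : q = u
      · exact Or.inr (Or.inl hqu)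
      by_cases hqv : q = v
      · exact Or.inr (Or.inr hqv)
      refine Or.inl ⟨hqV, hpr.trans (ReachIn.of_adj (flapGraph_adj.2 ⟨hpV, hqV, hpq⟩) hpr.right ?_)⟩
      exact ⟨fun h => hqu (congrArg Subtype.val h), fun h => hqv (congrArg Subtype.val h)⟩
  have hQeq : Q = P := Set.eq_of_subset_of_ncard_le hQP (hmin _ _ _ hflap) (Set.toFinite _)
  have hw : w.1 ∉ P := by
    intro hw
    obtain ⟨h, hr⟩ := hQeq.ge hw
    exact hzw hr
  -- Now `u`, `v` and `w` would be three distinct elements of `{x, y}`.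
  have h1 : u.1 ∉ P := fun h => hflap.left (hQeq.ge h)
  have h2 : v.1 ∉ P := fun h => hflap.right (hQeq.ge h)
  have hu' : u.1 ∈ P ∪ {x, y} := u.2
  have hv' : v.1 ∈ P ∪ {x, y} := v.2
  have hw' : w.1 ∈ P ∪ {x, y} := w.2
  have h3 : u.1 ≠ v.1 := hflap.adj.ne
  have h4 : w.1 ≠ u.1 := fun h => hwu (Subtype.ext h)
  have h5 : w.1 ≠ v.1 := fun h => hwv (Subtype.ext h)
  simp only [Set.mem_union, Set.mem_insert_iff, Set.mem_singleton_iff] at hu' hv' hw'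
  grind

/-- The closure of a minimal flap has no separating edge: of two parts left by an edge `uv`, either
one misses `x` and `y`, and `reach_of_minimal` applies, or both contain an end of the edge `xy`. -/
lemma noSepEdge_of_minimal [Finite V] (hP : IsFlap G x y P)
    (hmin : ∀ x' y' Q, IsFlap G x' y' Q → P.ncard ≤ Q.ncard) :
    NoSepEdge (flapGraph G x y P).coe := by
  intro u v huv z w hzu hzv hwu hwv
  by_cases hz : ∀ t, ReachIn (flapGraph G x y P).coe {s | s ≠ u ∧ s ≠ v} z t → t.1 ≠ x ∧ t.1 ≠ y
  · exact reach_of_minimal hP hmin huv hzu hzv hwu hwv hz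
  by_cases hw : ∀ t, ReachIn (flapGraph G x y P).coe {s | s ≠ u ∧ s ≠ v} w t → t.1 ≠ x ∧ t.1 ≠ y
  · exact (reach_of_minimal hP hmin huv hwu hwv hzu hzv hw).symm
  push Not at hz hw
  obtain ⟨s, hzs, hs⟩ := hz
  obtain ⟨t, hwt, ht⟩ := hw
  -- Both parts meet the edge `xy`, hence they coincide.
  have hst : s = t ∨ G.Adj s.1 t.1 := by
    have := hP.adj
    have := hP.adj.symm
    rw [Subtype.ext_iff]
    by_cases h1 : s.1 = x <;> by_cases h2 : t.1 = x <;> simp_all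
  rcases hst with rfl | hst
  · exact hzs.trans hwt.symm
  · exact hzs.trans ((ReachIn.of_adj (flapGraph_adj.2 ⟨s.2, t.2, hst⟩) hzs.right hwt.right).trans
      hwt.symm)

/-- The closure of a minimal flap is a cycle. -/
lemma isCycleGraph_of_minimal [Finite V] (hG : G.CyclicallyOrientable) (h2 : G.IsTwoConnected)
    (hP : IsFlap G x y P)
    (hmin : ∀ x' y' Q, IsFlap G x' y' Q → P.ncard ≤ Q.ncard) :
    (flapGraph G x y P).coe.IsCycleGraph := by
  have hs := noSepEdge_of_minimal hP hmin
  have hco : (flapGraph G x y P).coe.CyclicallyOrientable :=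
    coe_cyclicallyOrientable hG _ fun a ha b hb hab => flapGraph_adj.2 ⟨ha, hb, hab⟩
  have hxV : x ∈ (flapGraph G x y P).verts := by simp
  have hyV : y ∈ (flapGraph G x y P).verts := by simp
  -- Each attaching vertex has a neighbour in `P`, the other one not being a cut vertex.
  have hxP : ∃ p ∈ P, G.Adj x p := by
    by_contra! h
    refine hP.left (mem_of_closed h2 hP.nonempty hP.right (fun p hp q hpq => ?_) hP.adj.ne)
    rcases hP.closed p hp q hpq with h' | rfl | rfl
    exacts [Or.inl h', absurd hpq.symm (h p hp), Or.inr rfl]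
  have hyP : ∃ p ∈ P, G.Adj y p := by
    by_contra! h
    refine hP.right (mem_of_closed h2 hP.nonempty hP.left (fun p hp q hpq => ?_) hP.adj.ne')
    rcases hP.closed p hp q hpq with h' | rfl | rfl
    exacts [Or.inl h', Or.inr rfl, absurd hpq.symm (h p hp)]
  -- A vertex of `P` has a neighbour different from any given vertex `t`.
  have hPt : ∀ p ∈ P, ∀ t, ∃ q, q ≠ t ∧ G.Adj p q := by
    intro p hp t
    have hpx : p ≠ x := fun h => hP.left (h ▸ hp)
    have hpy : p ≠ y := fun h => hP.right (h ▸ hp)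
    by_cases hpt : p = t
    · by_contra! h
      have := mem_of_closed (Q := {p}) (v := x) h2 ⟨p, rfl⟩ (fun h => hpx h.symm)
        (fun p' hp' q hpq => by
          rw [Set.mem_singleton_iff] at hp'
          subst hp'
          exact absurd hpq (h q (hpt ▸ hpq.ne'))) hP.adj.ne'
      exact hpy this.symm
    · by_contra! h
      have hall : ∀ w, w ≠ t → w = p := fun w hw => mem_of_closed (Q := {p}) (v := t) h2 ⟨p, rfl⟩
        (fun h => hpt h.symm)
        (fun p' hp' q hpq => by
          rw [Set.mem_singleton_iff] at hp'
          subst hp'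
          right
          by_contra hq
          exact h q hq hpq) hw
      have hx := hall x
      have hy := hall y
      have := hP.adj.ne
      grind
  have htwo : ∀ u : (flapGraph G x y P).verts, ∃ a b, a ≠ b ∧
      (flapGraph G x y P).coe.Adj u a ∧ (flapGraph G x y P).coe.Adj u b := by
    rintro ⟨u, hu⟩
    have hu' : u ∈ P ∨ u = x ∨ u = y := by simpa [or_comm, or_assoc] using hu
    rcases hu' with hu' | rfl | rfl
    · obtain ⟨a, -, ha⟩ := hPt u hu' u
      obtain ⟨b, hba, hb⟩ := hPt u hu' a
      have hV : ∀ c, G.Adj u c → c ∈ (flapGraph G x y P).verts := fun c hc => by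
        simpa [or_comm, or_assoc] using hP.closed u hu' c hc
      exact ⟨⟨a, hV a ha⟩, ⟨b, hV b hb⟩, fun h => hba (congrArg Subtype.val h).symm,
        flapGraph_adj.2 ⟨hu, hV a ha, ha⟩, flapGraph_adj.2 ⟨hu, hV b hb, hb⟩⟩
    · obtain ⟨p, hp, hup⟩ := hxP
      exact ⟨⟨y, hyV⟩, ⟨p, Or.inl hp⟩, fun h => hP.right (by rwa [show y = p from congrArg Subtype.val h]),
        flapGraph_adj.2 ⟨hu, hyV, hP.adj⟩, flapGraph_adj.2 ⟨hu, Or.inl hp, hup⟩⟩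
    · obtain ⟨p, hp, hup⟩ := hyP
      exact ⟨⟨x, hxV⟩, ⟨p, Or.inl hp⟩, fun h => hP.left (by rwa [show x = p from congrArg Subtype.val h]),
        flapGraph_adj.2 ⟨hu, hxV, hP.adj.symm⟩, flapGraph_adj.2 ⟨hu, Or.inl hp, hup⟩⟩
  have hconn : (flapGraph G x y P).coe.Preconnected := by
    -- `P` itself is connected because the edge `xy` does not separate its closure.
    have hPP : ∀ p q (hp : p ∈ P) (hq : q ∈ P),
        (flapGraph G x y P).coe.Reachable ⟨p, Or.inl hp⟩ ⟨q, Or.inl hq⟩ := by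
      intro p q hp hq
      have hx : ∀ r ∈ P, r ≠ x := fun r hr h => hP.left (h ▸ hr)
      have hy : ∀ r ∈ P, r ≠ y := fun r hr h => hP.right (h ▸ hr)
      obtain ⟨w, -⟩ := hs ⟨x, hxV⟩ ⟨y, hyV⟩ (flapGraph_adj.2 ⟨hxV, hyV, hP.adj⟩)
        ⟨p, Or.inl hp⟩ ⟨q, Or.inl hq⟩ (fun h => hx p hp (congrArg Subtype.val h))
        (fun h => hy p hp (congrArg Subtype.val h)) (fun h => hx q hq (congrArg Subtype.val h))
        (fun h => hy q hq (congrArg Subtype.val h))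
      exact ⟨w⟩
    have hreach : ∀ u : (flapGraph G x y P).verts, ∃ p, ∃ hp : p ∈ P,
        (flapGraph G x y P).coe.Reachable u ⟨p, Or.inl hp⟩ := by
      rintro ⟨u, hu⟩
      have hu' : u ∈ P ∨ u = x ∨ u = y := by simpa [or_comm, or_assoc] using hu
      rcases hu' with hu' | rfl | rfl
      · exact ⟨u, hu', Reachable.refl _⟩
      · obtain ⟨p, hp, hup⟩ := hxP
        exact ⟨p, hp, Adj.reachable (flapGraph_adj.2 ⟨hu, Or.inl hp, hup⟩)⟩
      · obtain ⟨p, hp, hup⟩ := hyP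
        exact ⟨p, hp, Adj.reachable (flapGraph_adj.2 ⟨hu, Or.inl hp, hup⟩)⟩
    intro u v
    obtain ⟨p, hp, hup⟩ := hreach u
    obtain ⟨q, hq, hvq⟩ := hreach v
    exact hup.trans ((hPP p q hp hq).trans hvq.symm)
  refine isCycleGraph_of_two_neighbors hconn ⟨x, hxV⟩ fun u => ?_
  obtain ⟨a, b, hab, ha, hb⟩ := htwo u
  refine ⟨a, b, hab, Set.ext fun c => ⟨fun hc => ?_, ?_⟩⟩
  · by_contra h
    simp only [Set.mem_insert_iff, Set.mem_singleton_iff, not_or] at h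
    exact no_three_neighbors hco hs ha hb hc hab.symm h.1 h.2
  · rintro (rfl | rfl)
    exacts [ha, hb]

end Flap

/-- The decomposition of a two-connected cyclically orientable graph: remove a minimal flap. -/
lemma forward [Finite V] {G : SimpleGraph V} (h2 : G.IsTwoConnected)
    (hG : G.CyclicallyOrientable) :
    (∃ x y : V, x ≠ y ∧ G.Adj x y ∧ ∀ v : V, v = x ∨ v = y) ∨
      ∃ (G' C : G.Subgraph) (x y : V), G' ⊔ C = ⊤ ∧
        G'.coe.CyclicallyOrientable ∧ C.coe.IsCycleGraph ∧ G'.MeetAlongSingleEdge C x y := by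
  obtain ⟨v⟩ := h2.1.nonempty
  obtain ⟨⟨w, hw⟩⟩ := (h2.2 v).nonempty
  obtain ⟨W⟩ := h2.1.preconnected v w
  obtain ⟨x₀, h₀⟩ : ∃ x, G.Adj v x := by
    cases W with
    | nil => exact absurd rfl hw
    | cons h _ => exact ⟨_, h⟩
  by_cases hall : ∀ z, z = v ∨ z = x₀
  · exact Or.inl ⟨v, x₀, h₀.ne, h₀, hall⟩
  right
  push Not at hall
  have hflap : ∃ n x y, ∃ P : Set V, IsFlap G x y P ∧ P.ncard = n := by
    refine ⟨_, v, x₀, {z | z ≠ v ∧ z ≠ x₀}, ⟨h₀, hall, by simp, by simp, ?_⟩, rfl⟩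
    intro p _ q _
    simp only [Set.mem_ofPred_eq]
    tauto
  classical
  obtain ⟨x, y, P, hP, hn⟩ := Nat.find_spec hflap
  have hmin : ∀ x' y' Q, IsFlap G x' y' Q → P.ncard ≤ Q.ncard := fun x' y' Q hQ =>
    hn ▸ Nat.find_min' hflap ⟨x', y', Q, hQ, rfl⟩
  have hadj' : ∀ a b, ((⊤ : G.Subgraph).induce Pᶜ).Adj a b ↔ a ∉ P ∧ b ∉ P ∧ G.Adj a b := by
    simp
  refine ⟨(⊤ : G.Subgraph).induce Pᶜ, flapGraph G x y P, x, y, ?_,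
    coe_cyclicallyOrientable hG _ fun a ha b hb hab => (hadj' a b).2 ⟨ha, hb, hab⟩,
    isCycleGraph_of_minimal hG h2 hP hmin, hP.adj.ne, ?_, ?_⟩
  · ext a b
    · simp
    · rw [Subgraph.sup_adj, hadj', flapGraph_adj, Subgraph.top_adj]
      refine ⟨by tauto, fun hab => ?_⟩
      by_cases ha : a ∈ P
      · exact Or.inr ⟨Or.inl ha, hP.closed a ha b hab, hab⟩
      by_cases hb : b ∈ P
      · exact Or.inr ⟨hP.closed b hb a hab.symm, Or.inl hb, hab⟩
      · exact Or.inl ⟨ha, hb, hab⟩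
  · ext a
    have := hP.left
    have := hP.right
    simp
    grind
  · ext e
    induction e with
    | _ a b =>
      rw [Subgraph.mem_edgeSet, Subgraph.inf_adj, hadj', flapGraph_adj]
      have := hP.left
      have := hP.right
      have h1 := hP.adj
      have h1' := hP.adj.symm
      have h2 : G.Adj a b → a ≠ b := fun h => h.ne
      simp only [Set.mem_union, Set.mem_insert_iff, Set.mem_singleton_iff, Sym2.eq_iff]
      grind

/-! ### Gluing a cycle along an edge -/

/-- If any two consecutive edges on a cycle are oriented consistently, the cycle is cyclically
oriented. -/
lemma isCyclicOn_of_agree {G : SimpleGraph V} (o : G.Orientation) {v : V} {c : G.Walk v v}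
    (hc : c.IsCycle)
    (h : ∀ a b e, a ∈ c.support → b ∈ c.support → e ∈ c.support → a ≠ e → G.Adj a b → G.Adj b e →
      (o.dir a b ↔ o.dir b e)) : o.IsCyclicOn c := by
  have hlen := hc.three_le_length
  have hne : ∀ i, i + 2 ≤ c.length → c.getVert i ≠ c.getVert (i + 2) := by
    intro i hi heq
    rcases Nat.eq_zero_or_pos i with rfl | hpos
    · have := hc.getVert_injOn' (x₁ := 0) (x₂ := 2) (by simp) (by simp; omega) heq
      omega
    · have := hc.getVert_injOn (x₁ := i) (x₂ := i + 2) (by simp; omega) (by simp; omega) heq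
      omega
  have key : ∀ i, i < c.length →
      (o.dir (c.getVert i) (c.getVert (i + 1)) ↔ o.dir (c.getVert 0) (c.getVert 1)) := by
    intro i
    induction i with
    | zero => simp
    | succ i ih =>
      intro hi
      rw [← ih (by omega)]
      exact (h _ _ _ (c.getVert_mem_support _) (c.getVert_mem_support _) (c.getVert_mem_support _)
        (hne i (by omega)) (c.adj_getVert_succ (by omega)) (c.adj_getVert_succ (by omega))).symm
  by_cases h0 : o.dir (c.getVert 0) (c.getVert 1)
  · left
    intro d hd
    obtain ⟨n, hn, rfl⟩ := List.getElem_of_mem hd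
    rw [Walk.darts_getElem_eq_getVert]
    exact (key n (by simpa using hn)).2 h0
  · right
    intro d hd
    obtain ⟨n, hn, rfl⟩ := List.getElem_of_mem hd
    rw [Walk.darts_getElem_eq_getVert]
    have hn' : n < c.length := by simpa using hn
    exact (o.adj_iff_dir _ _ (c.adj_getVert_succ hn').symm).2 fun h => h0 ((key n hn').1 h)

/-- A cycle graph has an orientation in which every vertex has at most one incoming and at most one
outgoing edge. -/
lemma exists_cyclic_orientation {G : SimpleGraph V} (hG : G.IsCycleGraph) :
    ∃ o : G.Orientation, (∀ a a' b, o.dir a b → o.dir a' b → a = a') ∧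
      (∀ a b b', o.dir a b → o.dir a b' → b = b') := by
  obtain ⟨v, c, hc, -, hedge⟩ := hG
  have hnd : (c.darts.map Dart.edge).Nodup := hc.1.1.edges_nodup
  refine ⟨⟨fun a b => ∃ d ∈ c.darts, d.fst = a ∧ d.snd = b, ?_, ?_⟩, ?_, ?_⟩
  · rintro _ _ ⟨d, -, rfl, rfl⟩
    exact d.adj
  · intro a b hab
    constructor
    · rintro ⟨d, hd, rfl, rfl⟩ ⟨d', hd', h1, h2⟩
      have hdd : d'.edge = d.edge := by
        rw [dart_edge_eq_iff]
        refine Or.inr (Dart.ext _ _ (Prod.ext h1 h2))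
      have := List.inj_on_of_nodup_map hnd hd' hd hdd
      subst this
      exact d'.adj.ne h1
    · intro h
      have hm := hedge s(a, b) hab
      rw [Walk.edges, List.mem_map] at hm
      obtain ⟨d, hd, hde⟩ := hm
      have : d.edge = s(d.fst, d.snd) := rfl
      rw [this, Sym2.eq_iff] at hde
      rcases hde with ⟨h1, h2⟩ | ⟨h1, h2⟩
      · exact ⟨d, hd, h1, h2⟩
      · exact absurd ⟨d, hd, h1, h2⟩ h
  · rintro a a' b ⟨d, hd, rfl, h⟩ ⟨d', hd', rfl, h'⟩
    have hn : (c.darts.map (·.snd)).Nodup := by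
      rw [Walk.map_snd_darts]
      exact hc.support_nodup
    rw [List.inj_on_of_nodup_map hn hd hd' (h.trans h'.symm)]
  · rintro a b b' ⟨d, hd, h, rfl⟩ ⟨d', hd', hfst, rfl⟩
    have hn : (c.darts.map (·.fst)).Nodup := by
      rw [Walk.map_fst_darts]
      exact hc.nodup_dropLast_support
    rw [List.inj_on_of_nodup_map hn hd hd' (h.trans hfst.symm)]

/-- The orientation of `exists_cyclic_orientation`, with consistency at each vertex spelled out and
with the direction of one edge prescribed. -/
lemma exists_cyclic_orientation' {G : SimpleGraph V} (hG : G.IsCycleGraph) {x y : V}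
    (hxy : G.Adj x y) (p : Prop) :
    ∃ o : G.Orientation, (∀ a b e, a ≠ e → G.Adj a b → G.Adj b e → (o.dir a b ↔ o.dir b e)) ∧
      (o.dir x y ↔ p) := by
  obtain ⟨o, hin, hout⟩ := exists_cyclic_orientation hG
  have key : ∀ a b e, a ≠ e → G.Adj a b → G.Adj b e → (o.dir a b ↔ o.dir b e) := by
    intro a b e hae hab hbe
    constructor
    · intro h
      rw [o.adj_iff_dir b e hbe]
      exact fun h' => hae (hin _ _ _ h h')
    · intro h
      rw [o.adj_iff_dir a b hab]
      exact fun h' => hae (hout _ _ _ h' h)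
  by_cases hp : o.dir x y ↔ p
  · exact ⟨o, key, hp⟩
  · refine ⟨⟨fun a b => o.dir b a, fun a b h => (o.dir_adj _ _ h).symm,
      fun a b h => o.adj_iff_dir _ _ h.symm⟩, ?_, ?_⟩
    · exact fun a b e hae hab hbe => (key e b a hae.symm hbe.symm hab.symm).symm
    · have := o.adj_iff_dir x y hxy
      simp only
      tauto

lemma IsCycleGraph.cyclicallyOrientable {G : SimpleGraph V} (hG : G.IsCycleGraph) :
    G.CyclicallyOrientable := by
  obtain ⟨v, c, hc, -, -⟩ := id hG
  have h01 : G.Adj (c.getVert 0) (c.getVert 1) :=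
    c.adj_getVert_succ (by have := hc.three_le_length; omega)
  obtain ⟨o, ho, -⟩ := exists_cyclic_orientation' hG h01 True
  exact ⟨o, fun _ _ hc => isCyclicOn_of_agree o hc.1 fun a b e _ _ _ => ho a b e⟩

lemma cyclicallyOrientable_of_edge {G : SimpleGraph V} {x y : V} (hne : x ≠ y) (hxy : G.Adj x y)
    (hall : ∀ v : V, v = x ∨ v = y) : G.CyclicallyOrientable := by
  refine ⟨⟨fun a b => a = x ∧ b = y, ?_, ?_⟩, ?_⟩
  · rintro a b ⟨rfl, rfl⟩
    exact hxy
  · intro a b hab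
    have := hab.ne
    rcases hall a with rfl | rfl <;> rcases hall b with rfl | rfl <;> simp_all
  · -- Among three vertices of a cycle two coincide.
    intro v c hc
    have hlen := hc.1.three_le_length
    have hinj : ∀ i j, i < 3 → j < 3 → c.getVert i = c.getVert j → i = j := fun i j hi hj h =>
      hc.1.getVert_injOn' (by simp; omega) (by simp; omega) h
    have h01 := hinj 0 1
    have h02 := hinj 0 2
    have h12 := hinj 1 2
    rcases hall (c.getVert 0) with h0 | h0 <;> rcases hall (c.getVert 1) with h1 | h1 <;>
      rcases hall (c.getVert 2) with h2 | h2 <;> simp_all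

section Glue

variable {G : SimpleGraph V}

/-- The relation on the vertices of `G` induced by an orientation of a subgraph. -/
def liftDir (H : G.Subgraph) (o : H.coe.Orientation) (a b : V) : Prop :=
  ∃ (ha : a ∈ H.verts) (hb : b ∈ H.verts), o.dir ⟨a, ha⟩ ⟨b, hb⟩

lemma liftDir_adj {H : G.Subgraph} {o : H.coe.Orientation} {a b : V} (h : liftDir H o a b) :
    H.Adj a b := by
  obtain ⟨ha, hb, h⟩ := h
  exact o.dir_adj _ _ h

lemma liftDir_iff {H : G.Subgraph} (o : H.coe.Orientation) {a b : V} (ha : a ∈ H.verts)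
    (hb : b ∈ H.verts) : liftDir H o a b ↔ o.dir ⟨a, ha⟩ ⟨b, hb⟩ :=
  ⟨fun ⟨_, _, h⟩ => h, fun h => ⟨ha, hb, h⟩⟩

lemma liftDir_iff_not {H : G.Subgraph} (o : H.coe.Orientation) {a b : V} (h : H.Adj a b) :
    liftDir H o a b ↔ ¬ liftDir H o b a := by
  rw [liftDir_iff o (H.edge_vert h) (H.edge_vert h.symm),
    liftDir_iff o (H.edge_vert h.symm) (H.edge_vert h)]
  exact o.adj_iff_dir _ _ h

/-- A walk of `G` inside an induced subgraph is the image of a walk of that subgraph. -/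
lemma exists_walk_map {H : G.Subgraph}
    (hH : ∀ a ∈ H.verts, ∀ b ∈ H.verts, G.Adj a b → H.Adj a b) {a b : V} (w : G.Walk a b)
    (hw : ∀ x ∈ w.support, x ∈ H.verts) (ha : a ∈ H.verts) (hb : b ∈ H.verts) :
    ∃ w' : H.coe.Walk ⟨a, ha⟩ ⟨b, hb⟩, w'.map H.hom = w := by
  induction w with
  | nil => exact ⟨Walk.nil, rfl⟩
  | @cons u v w huv p ih =>
    have hv : v ∈ H.verts := hw v (by simp)
    obtain ⟨w', hw'⟩ := ih (fun x hx => hw x (by simp [hx])) hv hb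
    refine ⟨Walk.cons (show H.coe.Adj ⟨u, ha⟩ ⟨v, hv⟩ from hH _ ha _ hv huv) w', ?_⟩
    rw [Walk.map_cons, hw']
    rfl

/-- A walk leaving `A` for a vertex outside `A` passes through a vertex of `A ∩ B`, provided that
each edge lies inside `A` or inside `B`. -/
lemma exists_mem_inter {A B : Set V}
    (hAB : ∀ a b, G.Adj a b → (a ∈ A ∧ b ∈ A) ∨ (a ∈ B ∧ b ∈ B)) {p q : V} (w : G.Walk p q)
    (hp : p ∈ A) (hq : q ∉ A) : ∃ r ∈ w.support, r ∈ A ∧ r ∈ B := by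
  induction w with
  | nil => exact absurd hp hq
  | @cons u v w huv t ih =>
    by_cases hv : v ∈ A
    · obtain ⟨r, hr, h⟩ := ih hv hq
      exact ⟨r, by simp [hr], h⟩
    · rcases hAB u v huv with h | h
      · exact absurd h.2 hv
      · exact ⟨u, by simp, hp, h.1⟩

/-- If `A` and `B` cover all edges and overlap in the two ends of an edge `xy`, a chordless cycle
lies in `A` or in `B`: a cycle visiting both sides passes through `x` and `y` on different arcs, so
that `xy` is a chord. -/
lemma chordless_side {A B : Set V} {x y : V}
    (hAB : ∀ a b, G.Adj a b → (a ∈ A ∧ b ∈ A) ∨ (a ∈ B ∧ b ∈ B))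
    (hcover : ∀ a, a ∈ A ∨ a ∈ B) (hinter : ∀ a, a ∈ A → a ∈ B → a = x ∨ a = y)
    (hx : x ∈ A ∧ x ∈ B) (hy : y ∈ A ∧ y ∈ B)
    (hxy : G.Adj x y) {v : V} {c : G.Walk v v} (hc : c.IsChordlessCycle) :
    (∀ z ∈ c.support, z ∈ A) ∨ (∀ z ∈ c.support, z ∈ B) := by
  classical
  by_contra! hcon
  obtain ⟨⟨p, hpc, hpA⟩, q, hqc, hqB⟩ := hcon
  have hpB : p ∈ B := (hcover p).resolve_left hpA
  have hqA : q ∈ A := (hcover q).resolve_right hqB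
  have hcyc := hc.1.rotate hpc
  have hqc' : q ∈ (c.rotate p hpc).support := by rwa [Walk.mem_support_rotate_iff]
  have hsupp : ∀ r, r ∈ (c.rotate p hpc).support → r ∈ c.support := fun r hr => by
    rwa [Walk.mem_support_rotate_iff] at hr
  have hedges : ∀ e, e ∈ c.edges → e ∈ (c.rotate p hpc).edges := fun e he =>
    (c.rotate_edges p hpc).mem_iff.2 he
  revert hcyc hqc' hsupp hedges
  generalize c.rotate p hpc = c'
  intro hcyc hqc' hsupp hedges
  have hspec := c'.take_spec hqc'
  have hs1 := c'.support_takeUntil_subset_support hqc'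
  have hs2 := c'.support_dropUntil_subset_support hqc'
  revert hspec hs1 hs2
  generalize c'.takeUntil q hqc' = w1
  generalize c'.dropUntil q hqc' = w2
  intro hspec hs1 hs2
  -- The two arcs between `p` and `q` share no inner vertex.
  have hdisj : ∀ r, r ∈ w1.support → r ∈ w2.support → r ≠ p → r ≠ q → False := by
    intro r h1 h2 hrp hrq
    have hnd := hcyc.support_nodup
    rw [← hspec, Walk.tail_support_append, List.nodup_append'] at hnd
    rw [Walk.mem_support_iff] at h1 h2
    exact hnd.2.2 (h1.resolve_left hrp) (h2.resolve_left hrq)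
  have hAB' : ∀ a b, G.Adj a b → (a ∈ B ∧ b ∈ B) ∨ (a ∈ A ∧ b ∈ A) := fun a b h => (hAB a b h).symm
  obtain ⟨r, hr1, hrB, hrA⟩ := exists_mem_inter hAB' w1 hpB hqB
  obtain ⟨s, hs2', hsA, hsB⟩ := exists_mem_inter hAB w2 hqA hpA
  have hrp : r ≠ p := fun h => hpA (h ▸ hrA)
  have hrq : r ≠ q := fun h => hqB (h ▸ hrB)
  have hsp : s ≠ p := fun h => hpA (h ▸ hsA)
  have hsq : s ≠ q := fun h => hqB (h ▸ hsB)
  have hr2 : r ∉ w2.support := fun h => hdisj r hr1 h hrp hrq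
  have hs1' : s ∉ w1.support := fun h => hdisj s h hs2' hsp hsq
  have hrs : G.Adj r s := by
    have hne : r ≠ s := fun h => hs1' (h ▸ hr1)
    have := hxy.symm
    rcases hinter r hrA hrB with rfl | rfl <;> rcases hinter s hsA hsB with rfl | rfl <;>
      first | assumption | exact absurd rfl hne
  have he := hedges _ (hc.2 r s (hsupp _ (hs1 hr1)) (hsupp _ (hs2 hs2')) hrs)
  rw [← hspec, Walk.edges_append, List.mem_append] at he
  rcases he with he | he
  · exact hs1' (w1.snd_mem_support_of_mem_edges he)
  · exact hr2 (w2.fst_mem_support_of_mem_edges he)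

lemma isChordlessCycle_of_map {H : G.Subgraph} {u : H.verts} {c : H.coe.Walk u u}
    (hc : (c.map H.hom).IsChordlessCycle) : c.IsChordlessCycle := by
  refine ⟨(Walk.isCycle_map_iff_of_injective Subgraph.hom_injective).1 hc.1, ?_⟩
  intro a b ha hb hab
  have hm := hc.2 a b (by rw [Walk.support_map]; exact List.mem_map_of_mem ha)
    (by rw [Walk.support_map]; exact List.mem_map_of_mem hb) (H.adj_sub hab)
  rw [Walk.edges_map, List.mem_map] at hm
  obtain ⟨e, he, hee⟩ := hm
  have : e = s(a, b) := Sym2.map.injective Subgraph.hom_injective hee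
  exact this ▸ he

lemma isCyclicOn_map {H : G.Subgraph} {u : H.verts} {c : H.coe.Walk u u} {o : G.Orientation}
    {o' : H.coe.Orientation} (h : ∀ a b : H.verts, o'.dir a b → o.dir a b)
    (hc : o'.IsCyclicOn c) : o.IsCyclicOn (c.map H.hom) := by
  refine hc.imp (fun hc d hd => ?_) (fun hc d hd => ?_)
  all_goals
    rw [Walk.darts_map, List.mem_map] at hd
    obtain ⟨d, hd, rfl⟩ := hd
    exact h _ _ (hc d hd)

/-- Gluing a cycle to a cyclically orientable graph along an edge preserves cyclic
orientability. -/
lemma cyclicallyOrientable_of_glue {G' C : G.Subgraph} {x y : V} (hsup : G' ⊔ C = ⊤)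
    (hG' : G'.coe.CyclicallyOrientable) (hC : C.coe.IsCycleGraph)
    (hm : G'.MeetAlongSingleEdge C x y) : G.CyclicallyOrientable := by
  obtain ⟨o', ho'⟩ := hG'
  obtain ⟨-, hverts, hedge⟩ := hm
  have hxy : G'.Adj x y ∧ C.Adj x y := by
    rw [← Subgraph.inf_adj, ← Subgraph.mem_edgeSet, hedge]
    rfl
  have hinter : ∀ a, a ∈ G'.verts → a ∈ C.verts → a = x ∨ a = y := by
    intro a h1 h2
    have : a ∈ (G' ⊓ C).verts := ⟨h1, h2⟩
    rw [hverts] at this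
    exact this
  have hadj : ∀ a b, G.Adj a b → G'.Adj a b ∨ C.Adj a b := by
    intro a b h
    rw [← Subgraph.sup_adj, hsup]
    exact h
  have hcover : ∀ a, a ∈ G'.verts ∨ a ∈ C.verts := by
    intro a
    have : a ∈ (G' ⊔ C).verts := by simp [hsup]
    exact this
  -- Both subgraphs are induced, since an edge inside the overlap can only be `xy`.
  have hpair : ∀ a b, a ≠ b → a ∈ G'.verts → a ∈ C.verts → b ∈ G'.verts → b ∈ C.verts →
      (a = x ∧ b = y) ∨ (a = y ∧ b = x) := by
    intro a b hab h1 h2 h3 h4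
    have := hinter a h1 h2
    have := hinter b h3 h4
    grind
  have hboth : ∀ a b, G.Adj a b → a ∈ G'.verts → a ∈ C.verts → b ∈ G'.verts → b ∈ C.verts →
      G'.Adj a b ∧ C.Adj a b := by
    intro a b hab h1 h2 h3 h4
    rcases hpair a b hab.ne h1 h2 h3 h4 with ⟨rfl, rfl⟩ | ⟨rfl, rfl⟩
    · exact hxy
    · exact ⟨hxy.1.symm, hxy.2.symm⟩
  have hind' : ∀ a ∈ G'.verts, ∀ b ∈ G'.verts, G.Adj a b → G'.Adj a b := by
    intro a ha b hb hab
    rcases hadj a b hab with h | h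
    · exact h
    · exact (hboth a b hab ha (C.edge_vert h) hb (C.edge_vert h.symm)).1
  have hindC : ∀ a ∈ C.verts, ∀ b ∈ C.verts, G.Adj a b → C.Adj a b := by
    intro a ha b hb hab
    rcases hadj a b hab with h | h
    · exact (hboth a b hab (G'.edge_vert h) ha (G'.edge_vert h.symm) hb).2
    · exact h
  have hxC := C.edge_vert hxy.2
  have hyC := C.edge_vert hxy.2.symm
  obtain ⟨oc, hagree, hoc⟩ := exists_cyclic_orientation' hC
    (show C.coe.Adj ⟨x, hxC⟩ ⟨y, hyC⟩ from hxy.2) (liftDir G' o' x y)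
  rw [← liftDir_iff] at hoc
  -- The two orientations agree on the common edge.
  have hcommon : ∀ a b, G'.Adj a b → C.Adj a b → (liftDir C oc a b ↔ liftDir G' o' a b) := by
    intro a b h1 h2
    rcases hpair a b h1.ne (G'.edge_vert h1) (C.edge_vert h2) (G'.edge_vert h1.symm)
      (C.edge_vert h2.symm) with ⟨rfl, rfl⟩ | ⟨rfl, rfl⟩
    · exact hoc
    · rw [liftDir_iff_not oc h2, liftDir_iff_not o' h1, hoc]
  have hd' : ∀ a b, G'.Adj a b → (liftDir G' o' a b ∨ liftDir C oc a b ↔ liftDir G' o' a b) := by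
    intro a b h
    refine ⟨?_, Or.inl⟩
    rintro (h' | h')
    · exact h'
    · exact (hcommon a b h (liftDir_adj h')).1 h'
  have hdC : ∀ a b, C.Adj a b → (liftDir G' o' a b ∨ liftDir C oc a b ↔ liftDir C oc a b) := by
    intro a b h
    refine ⟨?_, Or.inr⟩
    rintro (h' | h')
    · exact (hcommon a b (liftDir_adj h') h).2 h'
    · exact h'
  refine ⟨⟨fun a b => liftDir G' o' a b ∨ liftDir C oc a b, ?_, ?_⟩, ?_⟩
  · rintro a b (h | h)
    · exact (liftDir_adj h).adj_sub
    · exact (liftDir_adj h).adj_sub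
  · intro a b hab
    rcases hadj a b hab with h | h
    · rw [hd' a b h, hd' b a h.symm]
      exact liftDir_iff_not o' h
    · rw [hdC a b h, hdC b a h.symm]
      exact liftDir_iff_not oc h
  · intro v c hc
    have hside := chordless_side (A := G'.verts) (B := C.verts)
      (fun a b h => (hadj a b h).imp (fun h => ⟨G'.edge_vert h, G'.edge_vert h.symm⟩)
        (fun h => ⟨C.edge_vert h, C.edge_vert h.symm⟩)) hcover hinter
      ⟨G'.edge_vert hxy.1, hxC⟩ ⟨G'.edge_vert hxy.1.symm, hyC⟩ hxy.1.adj_sub hc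
    rcases hside with hside | hside
    · have hv := hside v c.start_mem_support
      obtain ⟨c', rfl⟩ := exists_walk_map hind' c hside hv hv
      exact isCyclicOn_map (fun a b h => Or.inl ⟨a.2, b.2, h⟩) (ho' _ c' (isChordlessCycle_of_map hc))
    · refine isCyclicOn_of_agree _ hc.1 fun a b e ha hb he hae hab hbe => ?_
      have ha := hside a ha
      have hb := hside b hb
      have he := hside e he
      have hab := hindC a ha b hb hab
      have hbe := hindC b hb e he hbe
      change (liftDir G' o' a b ∨ liftDir C oc a b) ↔ (liftDir G' o' b e ∨ liftDir C oc b e)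
      rw [hdC a b hab, hdC b e hbe, liftDir_iff oc ha hb, liftDir_iff oc hb he]
      exact hagree _ _ _ (fun h => hae (congrArg Subtype.val h)) hab hbe

end Glue

end CyclicOrient

/-- A two-connected finite simple graph `G` is cyclically orientable
iff `G` is a single edge, or a cycle, or `G = G' ∪ C` where `G'` is cyclically
orientable, `C` is a cycle, and `G'` and `C` meet along a single edge. -/
theorem twoConnected_co_iff {V : Type*} [Fintype V] (G : SimpleGraph V)
    (h2 : G.IsTwoConnected) :
    G.CyclicallyOrientable ↔
      ((∃ x y : V, x ≠ y ∧ G.Adj x y ∧ ∀ v : V, v = x ∨ v = y) ∨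
        G.IsCycleGraph ∨
        ∃ (G' C : G.Subgraph) (x y : V), G' ⊔ C = ⊤ ∧
          G'.coe.CyclicallyOrientable ∧ C.coe.IsCycleGraph ∧
          G'.MeetAlongSingleEdge C x y) := by
  constructor
  · intro hG
    rcases CyclicOrient.forward h2 hG with h | h
    exacts [Or.inl h, Or.inr (Or.inr h)]
  · rintro (⟨x, y, hne, hxy, hall⟩ | h | ⟨G', C, x, y, hsup, hG', hC, hm⟩)
    · exact CyclicOrient.cyclicallyOrientable_of_edge hne hxy hall
    · exact CyclicOrient.IsCycleGraph.cyclicallyOrientable h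
    · exact CyclicOrient.cyclicallyOrientable_of_glue hsup hG' hC hm
end

section
/- Let G be a finite simple graph that decomposes as G = G' ∪ C, where C is a cycle and G' is a subgraph such that G' and C meet along exactly one common edge (their intersection consists of one edge and its two endpoints). Then G is cyclically orientable if and only if G' is cyclically orientable. -/
/-!
Both pieces `G'` and `C` are induced subgraphs of `G`, because an edge of one piece whose endpoints
lie in the other can only be the common edge `xy`. So the situation is described by two vertex sets
`S` (of `G'`) and `T` (of `C`) that cover all edges of `G` and meet in `{x, y}`, with `x`, `y`
adjacent.

If `G` is cyclically orientable, the restriction of its orientation to the induced subgraph on `S`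
works, since chordless cycles of an induced subgraph are chordless in `G`
(`CyclicallyOrientable.of_embedding`).

For the converse, the cycle `C` is oriented as a directed cycle, in the sense that agrees with the
given orientation of `G'` on `xy`, and the two orientations are glued. The edge `xy` keeps every
chordless cycle of `G` on one side (`subset_or_subset_of_isChordlessCycle`): a chordless cycle with
vertices strictly on both sides splits into two arcs that share only their ends, each arc meets
`{x, y}`, and then `xy` joins inner vertices of different arcs, so it is a chord. Chordless cycles
inside `S` are handled by the hypothesis on `G'`. Those inside `T` are trails in a graph
where every vertex has at most one incoming and one outgoing edge, and a trail in such a graph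
cannot change direction (`Orientation.forall_darts_of_isTrail`).
-/

open SimpleGraph

variable {V : Type*}

namespace SimpleGraph

/-! ### Transfer along induced embeddings -/

section Transfer

variable {W : Type*} {H : SimpleGraph W} {G : SimpleGraph V}

/-- Pullback of an orientation along an embedding of graphs. -/
def Orientation.comap (o : G.Orientation) (f : H ↪g G) : H.Orientation where
  dir u v := o.dir (f u) (f v)
  dir_adj _ _ h := f.map_adj_iff.1 (o.dir_adj _ _ h)
  adj_iff_dir _ _ h := o.adj_iff_dir _ _ (f.map_adj_iff.2 h)

/-- The orientation with every edge reversed. -/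
def Orientation.flip (o : G.Orientation) : G.Orientation where
  dir u v := o.dir v u
  dir_adj _ _ h := (o.dir_adj _ _ h).symm
  adj_iff_dir _ _ h := o.adj_iff_dir _ _ h.symm

theorem Orientation.isCyclicOn_flip {o : G.Orientation} {v : V} {c : G.Walk v v} :
    o.flip.IsCyclicOn c ↔ o.IsCyclicOn c :=
  or_comm

theorem Walk.isChordlessCycle_map_iff (f : H ↪g G) {w : W} (c : H.Walk w w) :
    (c.map f.toHom).IsChordlessCycle ↔ c.IsChordlessCycle := by
  have hinj : Function.Injective f.toHom := f.injective
  refine and_congr (Walk.isCycle_map_iff_of_injective hinj) ?_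
  have key : ∀ a b, s(f a, f b) ∈ (c.map f.toHom).edges ↔ s(a, b) ∈ c.edges := by
    intro a b
    rw [Walk.edges_map]
    exact List.mem_map_of_injective (Sym2.map.injective hinj) (a := s(a, b))
  constructor
  · intro h a b ha hb hab
    rw [← key]
    refine h _ _ ?_ ?_ (f.map_adj_iff.2 hab) <;> rw [Walk.support_map]
    · exact List.mem_map_of_mem (f := f.toHom) ha
    · exact List.mem_map_of_mem (f := f.toHom) hb
  · intro h u v hu hv huv
    rw [Walk.support_map, List.mem_map] at hu hv
    obtain ⟨a, ha, rfl⟩ := hu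
    obtain ⟨b, hb, rfl⟩ := hv
    exact (key a b).2 (h a b ha hb (f.map_adj_iff.1 huv))

theorem Orientation.isCyclicOn_map_iff (o : G.Orientation) (f : H ↪g G) {w : W}
    (c : H.Walk w w) : o.IsCyclicOn (c.map f.toHom) ↔ (o.comap f).IsCyclicOn c := by
  simp [Orientation.IsCyclicOn, Walk.darts_map, Orientation.comap]

/-- Cyclic orientability passes to induced subgraphs. -/
theorem CyclicallyOrientable.of_embedding (f : H ↪g G) (hG : G.CyclicallyOrientable) :
    H.CyclicallyOrientable := by
  obtain ⟨o, ho⟩ := hG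
  exact ⟨o.comap f, fun w c hc =>
    (o.isCyclicOn_map_iff f c).1 (ho _ _ ((Walk.isChordlessCycle_map_iff f c).2 hc))⟩

end Transfer

/-! ### Orienting a single cycle -/

section CycleGraph

variable {H : SimpleGraph V}

/-- If all in-degrees and out-degrees are at most one, a trail runs along the orientation
throughout or against it throughout. -/
theorem Orientation.forall_darts_of_isTrail (o : H.Orientation)
    (hout : ∀ u v w, o.dir u v → o.dir u w → v = w)
    (hin : ∀ u v w, o.dir v u → o.dir w u → v = w) {a b : V} (p : H.Walk a b)
    (hp : p.IsTrail) :
    (∀ d ∈ p.darts, o.dir d.toProd.1 d.toProd.2) ∨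
      (∀ d ∈ p.darts, o.dir d.toProd.2 d.toProd.1) := by
  induction p with
  | nil => simp
  | @cons a b c h p ih =>
    have ih' := ih hp.of_cons
    cases p with
    | nil =>
      have := o.adj_iff_dir _ _ h
      simp only [Walk.darts_cons, Walk.darts_nil, List.mem_singleton, forall_eq]
      tauto
    | @cons _ b' _ h' q =>
      have hne : a ≠ b' := by
        rintro rfl
        have := hp.edges_nodup
        simp [Sym2.eq_swap] at this
      have h1 := o.adj_iff_dir _ _ h
      have h2 := o.adj_iff_dir _ _ h'
      have h3 := hout b a b'
      have h4 := hin b a b'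
      rw [Walk.darts_cons]
      simp only [List.forall_mem_cons]
      rcases ih' with ih' | ih'
      · have := ih' ⟨(b, b'), h'⟩ (by simp)
        simp only at this
        refine Or.inl ⟨?_, ih'⟩
        tauto
      · have := ih' ⟨(b, b'), h'⟩ (by simp)
        simp only at this
        refine Or.inr ⟨?_, ih'⟩
        tauto

/-- A graph consisting of a single cycle has an orientation for which all its cycles are cyclically
oriented. -/
theorem IsCycleGraph.exists_orientation (hH : H.IsCycleGraph) :
    ∃ o : H.Orientation, ∀ (v : V) (c : H.Walk v v), c.IsCycle → o.IsCyclicOn c := by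
  obtain ⟨z, c, hc, -, hedge⟩ := hH
  have hsnd : ∀ d ∈ c.darts, ∀ d' ∈ c.darts, d.snd = d'.snd → d = d' := by
    have : (c.darts.map (·.snd)).Nodup := by
      rw [Walk.map_snd_darts]; exact hc.support_nodup
    exact fun d hd d' hd' h => List.inj_on_of_nodup_map this hd hd' h
  have hfst : ∀ d ∈ c.darts, ∀ d' ∈ c.darts, d.fst = d'.fst → d = d' := by
    have : (c.darts.map (·.fst)).Nodup := by
      rw [Walk.map_fst_darts]
      exact c.tail_support_perm_dropLast_support.nodup_iff.mp hc.support_nodup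
    exact fun d hd d' hd' h => List.inj_on_of_nodup_map this hd hd' h
  have hedg : ∀ d ∈ c.darts, ∀ d' ∈ c.darts, d.edge = d'.edge → d = d' :=
    fun d hd d' hd' h => List.inj_on_of_nodup_map hc.edges_nodup hd hd' h
  let o : H.Orientation :=
    { dir := fun u v => ∃ d ∈ c.darts, d.fst = u ∧ d.snd = v
      dir_adj := by
        rintro u v ⟨d, -, rfl, rfl⟩
        exact d.adj
      adj_iff_dir := by
        intro u v huv
        constructor
        · rintro ⟨d, hd, rfl, rfl⟩ ⟨d', hd', h1, h2⟩
          have : d' = d := hedg d' hd' d hd (by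
            rw [dart_edge_eq_iff]
            right
            ext
            · exact h1
            · exact h2)
          subst this
          exact d'.adj.ne h1
        · intro hn
          obtain ⟨d, hd, he⟩ := List.mem_map.1 (hedge s(u, v) huv)
          rcases dart_edge_eq_mk'_iff'.1 he with ⟨h1, h2⟩ | ⟨h1, h2⟩
          · exact ⟨d, hd, h1, h2⟩
          · exact absurd ⟨d, hd, h1, h2⟩ hn }
  refine ⟨o, fun v p hp => o.forall_darts_of_isTrail ?_ ?_ p hp.isTrail⟩
  · rintro u v w ⟨d, hd, h1, rfl⟩ ⟨d', hd', h2, rfl⟩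
    rw [hfst d hd d' hd' (h1.trans h2.symm)]
  · rintro u v w ⟨d, hd, rfl, h1⟩ ⟨d', hd', rfl, h2⟩
    rw [hsnd d hd d' hd' (h1.trans h2.symm)]

end CycleGraph

/-! ### Gluing along an edge -/

section Gluing

variable {G : SimpleGraph V} {S T : Set V}

/-- If all edges of `G` lie in `S` or in `T`, a walk from a vertex of `S` to a vertex outside `S`
visits `S ∩ T`. -/
theorem Walk.exists_mem_inter (hcov : ∀ u v, G.Adj u v → u ∈ S ∧ v ∈ S ∨ u ∈ T ∧ v ∈ T)
    {a b : V} (p : G.Walk a b) (ha : a ∈ S) (hb : b ∉ S) :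
    ∃ z ∈ p.support, z ∈ S ∧ z ∈ T := by
  obtain ⟨d, hd, h1, h2⟩ := p.exists_boundary_dart S ha hb
  refine ⟨d.fst, p.dart_fst_mem_support_of_mem_darts hd, h1, ?_⟩
  have := hcov _ _ d.adj
  tauto

/-- If `S` and `T` meet in a clique, a chordless cycle lies on one side. -/
theorem subset_or_subset_of_isChordlessCycle
    (hcov : ∀ u v, G.Adj u v → u ∈ S ∧ v ∈ S ∨ u ∈ T ∧ v ∈ T)
    (hun : ∀ v, v ∈ S ∨ v ∈ T) (hcl : G.IsClique (S ∩ T)) {v : V} (c : G.Walk v v)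
    (hc : c.IsChordlessCycle) :
    (∀ u ∈ c.support, u ∈ S) ∨ (∀ u ∈ c.support, u ∈ T) := by
  classical
  by_contra! hcon
  obtain ⟨⟨b, hb, hbS⟩, a, ha, haT⟩ := hcon
  have haS : a ∈ S := (hun a).resolve_right haT
  have hmem : ∀ u, u ∈ (c.rotate a ha).support → u ∈ c.support := by
    intro u hu
    rwa [Walk.mem_support_rotate_iff] at hu
  have hcyc := hc.1.rotate ha
  have hbr : b ∈ (c.rotate a ha).support := by
    rwa [Walk.mem_support_rotate_iff]
  have hchord : ∀ u w : V, u ∈ (c.rotate a ha).support → w ∈ (c.rotate a ha).support →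
      G.Adj u w → s(u, w) ∈ (c.rotate a ha).edges := fun u w hu hw huw =>
    (c.rotate_edges a ha).mem_iff.2 (hc.2 u w (hmem u hu) (hmem w hw) huw)
  -- The two arcs of the cycle, from `a` to `b` and back.
  obtain ⟨p, q, hpq⟩ : ∃ (p : G.Walk a b) (q : G.Walk b a), c.rotate a ha = p.append q :=
    ⟨_, _, (Walk.take_spec _ hbr).symm⟩
  rw [hpq] at hcyc hchord
  have hdis : ∀ z, z ∈ p.support → z ∈ q.support → z ∈ S → z ∈ T → False := by
    intro z hzp hzq hzS hzT
    have hnd := hcyc.support_nodup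
    rw [Walk.tail_support_append] at hnd
    rw [Walk.mem_support_iff] at hzp hzq
    have hza : z ≠ a := by rintro rfl; exact haT hzT
    have hzb : z ≠ b := by rintro rfl; exact hbS hzS
    exact List.disjoint_of_nodup_append hnd (hzp.resolve_left hza) (hzq.resolve_left hzb)
  obtain ⟨z, hz, hzS, hzT⟩ := p.exists_mem_inter hcov haS hbS
  obtain ⟨w, hw, hwS, hwT⟩ := q.reverse.exists_mem_inter hcov haS hbS
  rw [Walk.support_reverse, List.mem_reverse] at hw
  have hne : z ≠ w := by rintro rfl; exact hdis z hz hw hzS hzT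
  have hzw := hchord z w (by rw [Walk.mem_support_append_iff]; exact Or.inl hz)
    (by rw [Walk.mem_support_append_iff]; exact Or.inr hw) (hcl ⟨hzS, hzT⟩ ⟨hwS, hwT⟩ hne)
  rw [Walk.edges_append, List.mem_append] at hzw
  rcases hzw with h | h
  · exact hdis w (p.snd_mem_support_of_mem_edges h) hw hwS hwT
  · exact hdis z hz (q.fst_mem_support_of_mem_edges h) hzS hzT

/-- Orientations of the induced subgraphs on `S` and `T` that agree on `S ∩ T` have a common
extension to `G`. -/
theorem exists_glued_orientation
    (hcov : ∀ u v, G.Adj u v → u ∈ S ∧ v ∈ S ∨ u ∈ T ∧ v ∈ T)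
    (oS : (G.induce S).Orientation) (oT : (G.induce T).Orientation)
    (hagree : ∀ u v (hu : u ∈ S) (hv : v ∈ S) (hu' : u ∈ T) (hv' : v ∈ T), G.Adj u v →
      (oS.dir ⟨u, hu⟩ ⟨v, hv⟩ ↔ oT.dir ⟨u, hu'⟩ ⟨v, hv'⟩)) :
    ∃ o : G.Orientation, o.comap (Embedding.induce S) = oS ∧ o.comap (Embedding.induce T) = oT := by
  let D : V → V → Prop := fun u v =>
    (∃ (hu : u ∈ S) (hv : v ∈ S), oS.dir ⟨u, hu⟩ ⟨v, hv⟩) ∨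
      ∃ (hu : u ∈ T) (hv : v ∈ T), oT.dir ⟨u, hu⟩ ⟨v, hv⟩
  have hDS : ∀ u v (hu : u ∈ S) (hv : v ∈ S), D u v ↔ oS.dir ⟨u, hu⟩ ⟨v, hv⟩ := by
    refine fun u v hu hv => ⟨?_, fun h => Or.inl ⟨hu, hv, h⟩⟩
    rintro (⟨_, _, h⟩ | ⟨hu', hv', h⟩)
    · exact h
    · exact (hagree u v hu hv hu' hv' (oT.dir_adj _ _ h)).2 h
  have hDT : ∀ u v (hu : u ∈ T) (hv : v ∈ T), D u v ↔ oT.dir ⟨u, hu⟩ ⟨v, hv⟩ := by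
    refine fun u v hu hv => ⟨?_, fun h => Or.inr ⟨hu, hv, h⟩⟩
    rintro (⟨hu', hv', h⟩ | ⟨_, _, h⟩)
    · exact (hagree u v hu' hv' hu hv (oS.dir_adj _ _ h)).1 h
    · exact h
  refine ⟨⟨D, ?_, ?_⟩, ?_, ?_⟩
  · rintro u v (⟨_, _, h⟩ | ⟨_, _, h⟩)
    · exact oS.dir_adj _ _ h
    · exact oT.dir_adj _ _ h
  · intro u v huv
    rcases hcov u v huv with ⟨hu, hv⟩ | ⟨hu, hv⟩
    · rw [hDS u v hu hv, hDS v u hv hu]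
      exact oS.adj_iff_dir ⟨u, hu⟩ ⟨v, hv⟩ huv
    · rw [hDT u v hu hv, hDT v u hv hu]
      exact oT.adj_iff_dir ⟨u, hu⟩ ⟨v, hv⟩ huv
  · cases oS
    simp only [Orientation.comap, Orientation.mk.injEq]
    funext u v
    exact propext (hDS u v u.2 v.2)
  · cases oT
    simp only [Orientation.comap, Orientation.mk.injEq]
    funext u v
    exact propext (hDT u v u.2 v.2)

theorem CyclicallyOrientable.of_induce {x y : V}
    (hcov : ∀ u v, G.Adj u v → u ∈ S ∧ v ∈ S ∨ u ∈ T ∧ v ∈ T)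
    (hun : ∀ v, v ∈ S ∨ v ∈ T) (hST : S ∩ T = {x, y}) (hxy : G.Adj x y)
    (hT : (G.induce T).IsCycleGraph) (hS : (G.induce S).CyclicallyOrientable) :
    G.CyclicallyOrientable := by
  have hx : x ∈ S ∩ T := by simp [hST]
  have hy : y ∈ S ∩ T := by simp [hST]
  obtain ⟨oS, hoS⟩ := hS
  -- Reverse the orientation of the cycle if it disagrees with `oS` on `xy`.
  obtain ⟨oT, hoT, hoxy⟩ : ∃ o : (G.induce T).Orientation,
      (∀ v (c : (G.induce T).Walk v v), c.IsCycle → o.IsCyclicOn c) ∧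
      (oS.dir ⟨x, hx.1⟩ ⟨y, hy.1⟩ ↔ o.dir ⟨x, hx.2⟩ ⟨y, hy.2⟩) := by
    obtain ⟨o, ho⟩ := hT.exists_orientation
    by_cases h : oS.dir ⟨x, hx.1⟩ ⟨y, hy.1⟩ ↔ o.dir ⟨x, hx.2⟩ ⟨y, hy.2⟩
    · exact ⟨o, ho, h⟩
    · refine ⟨o.flip, fun v c hc => Orientation.isCyclicOn_flip.2 (ho v c hc), ?_⟩
      have := o.adj_iff_dir ⟨x, hx.2⟩ ⟨y, hy.2⟩ hxy
      simp only [Orientation.flip]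
      tauto
  have hoyx : oS.dir ⟨y, hy.1⟩ ⟨x, hx.1⟩ ↔ oT.dir ⟨y, hy.2⟩ ⟨x, hx.2⟩ := by
    have h1 := oS.adj_iff_dir ⟨x, hx.1⟩ ⟨y, hy.1⟩ hxy
    have h2 := oT.adj_iff_dir ⟨x, hx.2⟩ ⟨y, hy.2⟩ hxy
    tauto
  have hcase : ∀ u, u ∈ S → u ∈ T → u = x ∨ u = y := by
    intro u h h'
    have : u ∈ S ∩ T := ⟨h, h'⟩
    simpa [hST] using this
  obtain ⟨o, rfl, rfl⟩ := exists_glued_orientation hcov oS oT (by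
    intro u v hu hv hu' hv' huv
    rcases hcase u hu hu' with rfl | rfl <;> rcases hcase v hv hv' with rfl | rfl
    · exact absurd huv (G.loopless.irrefl _)
    · exact hoxy
    · exact hoyx
    · exact absurd huv (G.loopless.irrefl _))
  have hcl : G.IsClique (S ∩ T) := by
    rw [hST]
    simp [hxy]
  refine ⟨o, fun v c hc => ?_⟩
  rcases subset_or_subset_of_isChordlessCycle hcov hun hcl c hc with h | h
  · rw [← c.map_induce h] at hc ⊢
    replace hc := (Walk.isChordlessCycle_map_iff _ _).1 hc
    exact (o.isCyclicOn_map_iff _ _).2 (hoS _ _ hc)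
  · rw [← c.map_induce h] at hc ⊢
    replace hc := (Walk.isChordlessCycle_map_iff _ _).1 hc
    exact (o.isCyclicOn_map_iff _ _).2 (hoT _ _ hc.1)

end Gluing

end SimpleGraph

/-! ### The decomposition theorem -/

/-- If `G = G' ∪ C` where `C` is a cycle and `G'` and `C` meet along
a single edge, then `G` is cyclically orientable iff `G'` is. -/
theorem co_iff_co_of_decomposition {V : Type*} [Fintype V] (G : SimpleGraph V)
    (G' C : G.Subgraph) (x y : V) (hdec : G' ⊔ C = ⊤) (hC : C.coe.IsCycleGraph)
    (hmeet : G'.MeetAlongSingleEdge C x y) :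
    G.CyclicallyOrientable ↔ G'.coe.CyclicallyOrientable := by
  obtain ⟨-, hverts, hedges⟩ := hmeet
  have hxy : G'.Adj x y ∧ C.Adj x y := by
    have : s(x, y) ∈ (G' ⊓ C).edgeSet := by simp [hedges]
    simpa using this
  have hadj : ∀ u v, G.Adj u v → G'.Adj u v ∨ C.Adj u v := by
    intro u v huv
    have : (G' ⊔ C).Adj u v := by rw [hdec]; exact huv
    simpa using this
  have hun : ∀ v, v ∈ G'.verts ∨ v ∈ C.verts := by
    intro v
    have : v ∈ (G' ⊔ C).verts := by rw [hdec]; trivial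
    simpa using this
  have hcase : ∀ u, u ∈ G'.verts → u ∈ C.verts → u = x ∨ u = y := by
    intro u h h'
    have : u ∈ (G' ⊓ C).verts := ⟨h, h'⟩
    simpa [hverts] using this
  have hboth : ∀ u v, u ∈ G'.verts → u ∈ C.verts → v ∈ G'.verts → v ∈ C.verts → G.Adj u v →
      G'.Adj u v ∧ C.Adj u v := by
    intro u v hu hu' hv hv' huv
    rcases hcase u hu hu' with rfl | rfl <;> rcases hcase v hv hv' with rfl | rfl
    · exact absurd huv (G.loopless.irrefl _)
    · exact hxy
    · exact ⟨hxy.1.symm, hxy.2.symm⟩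
    · exact absurd huv (G.loopless.irrefl _)
  have hG' : G'.coe = G.induce G'.verts := by
    ext ⟨u, hu⟩ ⟨v, hv⟩
    simp only [Subgraph.coe_adj, comap_adj, Function.Embedding.subtype_apply]
    refine ⟨fun h => h.adj_sub, fun h => (hadj u v h).elim id fun h' => ?_⟩
    exact (hboth u v hu h'.fst_mem hv h'.snd_mem h).1
  have hC' : C.coe = G.induce C.verts := by
    ext ⟨u, hu⟩ ⟨v, hv⟩
    simp only [Subgraph.coe_adj, comap_adj, Function.Embedding.subtype_apply]
    refine ⟨fun h => h.adj_sub, fun h => (hadj u v h).elim (fun h' => ?_) id⟩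
    exact (hboth u v h'.fst_mem hu h'.snd_mem hv h).2
  rw [hG']
  rw [hC'] at hC
  refine ⟨fun h => h.of_embedding (Embedding.induce _), fun h => ?_⟩
  exact CyclicallyOrientable.of_induce
    (fun u v huv => (hadj u v huv).imp (fun h => ⟨h.fst_mem, h.snd_mem⟩)
      fun h => ⟨h.fst_mem, h.snd_mem⟩) hun hverts hxy.1.adj_sub hC h
end

section
/- Let G be a finite simple graph that decomposes as G = G' ∪ C, where C is a cycle, G' is a subgraph, and G' and C meet along exactly one common edge (x, y) (their intersection consists of the edge (x, y) and its two endpoints). Then every chordless cycle of G is either a chordless cycle of G' or is equal to C; in particular, every cycle of G that contains a vertex of C other than x and y and is not equal to C has a chord. -/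
/-!
Let `c` be a chordless cycle of `G`. If all its vertices lie in `G'`, so do its edges, because an
edge of `C` with both ends in `G'` is the edge `x y`.

Otherwise `c` meets `C` in a vertex `w` other than `x` and `y`. All edges of `G` at such a vertex
belong to `C`, where it has degree two, so `c` uses both edges of `C` there
(`adj_iff_of_neighborSet_subset`). Traverse `C` as `x, y, …, x` (`exists_cycle_snd`); following it
from `w` in both directions, `c` reaches every vertex of `C`, and being chordless it contains every
edge of `C` (`toSubgraph_le_of_follow`). A cycle containing another cycle is equal to it
(`toSubgraph_eq_of_le`).

The second claim is the contrapositive of the first: a chordless cycle through a vertex of `C`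
other than `x` and `y` is not contained in `G'`, hence equals `C`.
-/

open SimpleGraph

variable {V : Type*}

/-- A vertex `w` common to the cycles `c` and `d` has degree two in each, so if all edges of `c`
at `w` are edges of `d`, then `c` uses both edges of `d` at `w`. -/
theorem adj_iff_of_neighborSet_subset {V : Type*} {G : SimpleGraph V} {v x w : V}
    {c : G.Walk v v} {d : G.Walk x x} (hc : c.IsCycle) (hd : d.IsCycle)
    (hwc : w ∈ c.support) (hwd : w ∈ d.support)
    (h : ∀ z, c.toSubgraph.Adj w z → d.toSubgraph.Adj w z) (z : V) :
    c.toSubgraph.Adj w z ↔ d.toSubgraph.Adj w z := by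
  have key : c.toSubgraph.neighborSet w = d.toSubgraph.neighborSet w :=
    Set.eq_of_subset_of_ncard_le h
      (by rw [hc.ncard_neighborSet_toSubgraph_eq_two hwc,
        hd.ncard_neighborSet_toSubgraph_eq_two hwd])
      d.finite_neighborSet_toSubgraph
  exact Set.ext_iff.mp key z

theorem toSubgraph_eq_of_le {V : Type*} {G : SimpleGraph V} {v x : V}
    {c : G.Walk v v} {d : G.Walk x x} (hc : c.IsCycle) (hd : d.IsCycle)
    (h : d.toSubgraph ≤ c.toSubgraph) : c.toSubgraph = d.toSubgraph := by
  classical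
  have hx : x ∈ c.support := c.mem_verts_toSubgraph.mp (h.1 d.start_mem_verts_toSubgraph)
  have hadj : ∀ w ∈ d.support, ∀ z, c.toSubgraph.Adj w z → d.toSubgraph.Adj w z := fun w hw z =>
    (adj_iff_of_neighborSet_subset hd hc hw
      (c.mem_verts_toSubgraph.mp (h.1 (d.mem_verts_toSubgraph.mpr hw))) (fun z hz => h.2 hz) z).mpr
  -- Walking along `c` from the common vertex `x`, one never leaves `d`.
  have hmem : ∀ i, (c.rotate x hx).getVert i ∈ d.support := by
    intro i
    induction i with
    | zero => simp
    | succ i ih =>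
      by_cases hi : i < (c.rotate x hx).length
      · have h1 := (c.rotate x hx).toSubgraph_adj_getVert hi
        rw [Walk.toSubgraph_rotate] at h1
        exact Walk.mem_support_of_adj_toSubgraph (hadj _ ih _ h1).symm
      · rw [Walk.getVert_of_length_le _ (by omega)]
        simp
  have hsupp : ∀ w ∈ c.support, w ∈ d.support := by
    intro w hw
    have hw' : w ∈ (c.rotate x hx).support := by
      rw [← Walk.mem_verts_toSubgraph, Walk.toSubgraph_rotate]
      simpa using hw
    obtain ⟨i, rfl, -⟩ := Walk.mem_support_iff_exists_getVert.mp hw'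
    exact hmem i
  refine le_antisymm ?_ h
  refine ⟨fun w hw => ?_, fun w z hwz => ?_⟩
  · exact d.mem_verts_toSubgraph.mpr (hsupp w (c.mem_verts_toSubgraph.mp hw))
  · exact hadj w (hsupp w (Walk.mem_support_of_adj_toSubgraph hwz)) z hwz

/-- The cycle graph `C` is traced by a closed walk of `G` that starts with the edge `x y`. -/
theorem exists_cycle_snd {V : Type*} {G : SimpleGraph V} {C : G.Subgraph} {x y : V}
    (hC : C.coe.IsCycleGraph) (hxy : C.Adj x y) :
    ∃ d : G.Walk x x, d.IsCycle ∧ d.toSubgraph = C ∧ d.getVert 1 = y := by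
  classical
  obtain ⟨v, c, hc, hs, he⟩ := hC
  have htop : c.toSubgraph = ⊤ := by
    refine le_antisymm le_top ⟨fun w _ => by simpa using hs w, fun a b hab => ?_⟩
    exact Walk.adj_toSubgraph_iff_mem_edges.mpr (he _ hab)
  have hd : (c.map C.hom).IsCycle := hc.map C.hom_injective
  have hdC : (c.map C.hom).toSubgraph = C := by
    rw [Walk.toSubgraph_map, htop]
    ext a b <;> simp
  have hx : x ∈ (c.map C.hom).support := by
    rw [← Walk.mem_verts_toSubgraph, hdC]
    exact C.edge_vert hxy
  have hd' := hd.rotate hx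
  have hdC' := ((c.map C.hom).toSubgraph_rotate hx).trans hdC
  have hy : y ∈ ((c.map C.hom).rotate x hx).toSubgraph.neighborSet x := by
    rw [hdC']
    exact hxy
  rw [hd'.neighborSet_toSubgraph_endpoint] at hy
  rcases hy with hy | hy
  · exact ⟨_, hd', hdC', hy.symm⟩
  · refine ⟨_, hd'.reverse, (Walk.toSubgraph_reverse _).trans hdC', ?_⟩
    exact (Walk.snd_reverse _).trans hy.symm

/-- A chordless cycle `c` through a vertex of `d` other than `x` and `y`, where all edges of
`G` at each such vertex belong to `d`, follows `d` in both directions up to `x` and `y`, and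
contains the edge `x y` since it is not a chord. -/
theorem toSubgraph_le_of_follow {V : Type*} {G : SimpleGraph V} {v x y w : V}
    {c : G.Walk v v} {d : G.Walk x x} (hc : c.IsChordlessCycle) (hd : d.IsCycle)
    (hy : d.getVert 1 = y)
    (hnb : ∀ u, u ∈ d.support → u ≠ x → u ≠ y → ∀ z, G.Adj u z → d.toSubgraph.Adj u z)
    (hwc : w ∈ c.support) (hwd : w ∈ d.support) (hwx : w ≠ x) (hwy : w ≠ y) :
    d.toSubgraph ≤ c.toSubgraph := by
  have hlen := hd.three_le_length
  have hfol : ∀ u, u ∈ c.support → u ∈ d.support → u ≠ x → u ≠ y →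
      ∀ z, d.toSubgraph.Adj u z → c.toSubgraph.Adj u z := fun u huc hud hux huy z =>
    (adj_iff_of_neighborSet_subset hc.1 hd huc hud
      (fun z hz => hnb u hud hux huy z hz.adj_sub) z).mpr
  have hinj := hd.getVert_injOn
  have hnx : ∀ i, 2 ≤ i → i < d.length → d.getVert i ≠ x := by
    intro i h2 hi h
    have := hinj (by simp; omega) (by simp; omega) (h.trans d.getVert_length.symm)
    omega
  have hny : ∀ i, 2 ≤ i → i < d.length → d.getVert i ≠ y := by
    intro i h2 hi h
    have := hinj (by simp; omega) (by simp; omega) (h.trans hy.symm)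
    omega
  have hstep : ∀ i, 2 ≤ i → i < d.length → d.getVert i ∈ c.support →
      d.getVert (i + 1) ∈ c.support ∧ d.getVert (i - 1) ∈ c.support := by
    intro i h2 hi hic
    have hf := hfol _ hic (d.getVert_mem_support i) (hnx i h2 hi) (hny i h2 hi)
    refine ⟨Walk.mem_support_of_adj_toSubgraph (hf _ (d.toSubgraph_adj_getVert hi)).symm, ?_⟩
    have h1 := d.toSubgraph_adj_getVert (i := i - 1) (by omega)
    rw [Nat.sub_add_cancel (by omega)] at h1
    exact Walk.mem_support_of_adj_toSubgraph (hf _ h1.symm).symm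
  obtain ⟨k, hk, hkl⟩ := Walk.mem_support_iff_exists_getVert.mp hwd
  have hk0 : k ≠ 0 := by
    rintro rfl
    exact hwx (by simpa using hk.symm)
  have hk1 : k ≠ 1 := by
    rintro rfl
    exact hwy (hk.symm.trans hy)
  have hup : ∀ i, k ≤ i → i ≤ d.length → d.getVert i ∈ c.support := by
    intro i hi
    induction i, hi using Nat.le_induction with
    | base => intro _; rwa [hk]
    | succ i hi ih => intro h; exact (hstep i (by omega) (by omega) (ih (by omega))).1
  have hkl' : k ≠ d.length := by
    rintro rfl
    exact hwx (by simpa using hk.symm)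
  have hdown : ∀ j, j < k → d.getVert (k - j) ∈ c.support := by
    intro j
    induction j with
    | zero => intro _; simpa [hk] using hwc
    | succ j ih => intro h; exact (hstep (k - j) (by omega) (by omega) (ih (by omega))).2
  have hall : ∀ u ∈ d.support, u ∈ c.support := by
    intro u hu
    obtain ⟨i, rfl, hi⟩ := Walk.mem_support_iff_exists_getVert.mp hu
    rcases Nat.eq_zero_or_pos i with rfl | hpos
    · simpa using hup d.length hkl le_rfl
    · rcases le_total k i with h | h
      · exact hup i h hi
      · have := hdown (k - i) (by omega)
        rwa [Nat.sub_sub_self h] at this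
  refine ⟨fun u hu => ?_, fun a b hab => ?_⟩
  · exact c.mem_verts_toSubgraph.mpr (hall u (d.mem_verts_toSubgraph.mp hu))
  · exact Walk.adj_toSubgraph_iff_mem_edges.mpr (hc.2 a b
      (hall a (Walk.mem_support_of_adj_toSubgraph hab))
      (hall b (Walk.mem_support_of_adj_toSubgraph hab.symm)) hab.adj_sub)

/-- If `G = G' ∪ C` where `C` is a cycle meeting `G'` along the
single edge `(x, y)`, then every chordless cycle of `G` is a chordless cycle of
`G'` or equals `C`; in particular, every cycle of `G` containing a vertex of `C`
other than `x` and `y` and not equal to `C` has a chord. -/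
theorem chordlessCycles_of_decomposition {V : Type*} [Fintype V] (G : SimpleGraph V)
    (G' C : G.Subgraph) (x y : V) (hdec : G' ⊔ C = ⊤) (hC : C.coe.IsCycleGraph)
    (hmeet : G'.MeetAlongSingleEdge C x y) :
    (∀ (v : V) (c : G.Walk v v), c.IsChordlessCycle →
      (c.toSubgraph ≤ G' ∨ c.toSubgraph = C)) ∧
    (∀ (v : V) (c : G.Walk v v), c.IsCycle →
      (∃ w ∈ c.support, w ∈ C.verts ∧ w ≠ x ∧ w ≠ y) → c.toSubgraph ≠ C →
      ∃ u w : V, u ∈ c.support ∧ w ∈ c.support ∧ G.Adj u w ∧ s(u, w) ∉ c.edges) := by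
  classical
  obtain ⟨-, hV, hE⟩ := hmeet
  have hxy : G'.Adj x y ∧ C.Adj x y := by
    have h : s(x, y) ∈ (G' ⊓ C).edgeSet := by rw [hE]; rfl
    simpa using h
  have hcap : ∀ u, u ∈ G'.verts → u ∈ C.verts → u = x ∨ u = y := by
    intro u h1 h2
    have h : u ∈ (G' ⊓ C).verts := ⟨h1, h2⟩
    rw [hV] at h
    exact h
  have hcupV : ∀ u, u ∈ G'.verts ∨ u ∈ C.verts := by
    intro u
    have h : u ∈ (G' ⊔ C).verts := by rw [hdec]; trivial
    exact h
  have hcupE : ∀ u z, G.Adj u z → G'.Adj u z ∨ C.Adj u z := by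
    intro u z huz
    have h : (G' ⊔ C).Adj u z := by rw [hdec]; exact huz
    exact h
  obtain ⟨d, hd, hdC, hdy⟩ := exists_cycle_snd hC hxy.2
  have hchordless : ∀ (v : V) (c : G.Walk v v), c.IsChordlessCycle →
      (c.toSubgraph ≤ G' ∨ c.toSubgraph = C) := by
    intro v c hc
    by_cases hw : ∃ w ∈ c.support, w ∈ C.verts ∧ w ≠ x ∧ w ≠ y
    · right
      obtain ⟨w, hwc, hwC, hwx, hwy⟩ := hw
      have hmemd : ∀ u, u ∈ d.support ↔ u ∈ C.verts := by
        intro u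
        rw [← Walk.mem_verts_toSubgraph, hdC]
      rw [← hdC]
      refine toSubgraph_eq_of_le hc.1 hd (toSubgraph_le_of_follow hc hd hdy ?_ hwc
        ((hmemd w).mpr hwC) hwx hwy)
      intro u hu hux huy z huz
      rw [hdC]
      refine (hcupE u z huz).resolve_left fun h => ?_
      rcases hcap u (G'.edge_vert h) ((hmemd u).mp hu) with h | h
      exacts [hux h, huy h]
    · left
      push Not at hw
      have hall : ∀ u ∈ c.support, u ∈ G'.verts := by
        intro u hu
        rcases hcupV u with h | h
        · exact h
        · by_cases hux : u = x
          · exact hux ▸ G'.edge_vert hxy.1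
          · exact hw u hu h hux ▸ G'.edge_vert hxy.1.symm
      refine ⟨fun u hu => hall u (c.mem_verts_toSubgraph.mp hu), fun a b hab => ?_⟩
      rcases hcupE a b hab.adj_sub with h | h
      · exact h
        -- An edge of `C` with both ends in `G'` joins `x` and `y`.
      · have ha := hcap a (hall a (Walk.mem_support_of_adj_toSubgraph hab)) (C.edge_vert h)
        have hb := hcap b (hall b (Walk.mem_support_of_adj_toSubgraph hab.symm))
          (C.edge_vert h.symm)
        have hne := h.ne
        rcases ha with rfl | rfl <;> rcases hb with rfl | rfl
        exacts [(hne rfl).elim, hxy.1, hxy.1.symm, (hne rfl).elim]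
  refine ⟨hchordless, fun v c hc hw hne => ?_⟩
  by_contra! hno
  obtain ⟨w, hwc, hwC, hwx, hwy⟩ := hw
  rcases hchordless v c ⟨hc, hno⟩ with h | h
  · rcases hcap w (h.1 (c.mem_verts_toSubgraph.mpr hwc)) hwC with h | h
    exacts [hwx h, hwy h]
  · exact hne h
end
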